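/- arXiv:2308.12702 — 3 statements merged into one kernel-verified Lean document; each statement's English description precedes it below -/
import Mathlib

section
/- Let n ≥ 6 and let K_1, …, K_m be nonempty compact convex subsets of ℝ^n with m = ⌊(n − r_n − 1)/3⌋, where r_n = 5 if n ≡ 1 or 2 (mod 4), r_n = 4 if n ≡ 0 (mod 4), and r_n = 3 if n ≡ 3 (mod 4). Then there exist pairwise orthogonal unit vectors v_1, …, v_6 ∈ ℝ^n such that for every i, w_{K_i}(v_1) = w_{K_i}(v_2), w_{K_i}(v_3) = w_{K_i}(v_4), and w_{K_i}(v_5) = w_{K_i}(v_6). (Equivalently, there is an orthogonal decomposition ℝ^n = ℝ^2 ⊕ ℝ^2 ⊕ ℝ^2 ⊕ ℝ^{n-6} such that each region is inscribed in S × S × S × ℝ^{n-6} where S is a square.) -/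
open scoped RealInnerProductSpace

/-- The width of a set `K ⊆ ℝⁿ` in direction `v`:
`w_K(v) = sup_{x ∈ K} ⟪x, v⟫ − inf_{x ∈ K} ⟪x, v⟫`. -/
noncomputable def dirWidth {n : ℕ} (K : Set (EuclideanSpace ℝ (Fin n)))
    (v : EuclideanSpace ℝ (Fin n)) : ℝ :=
  sSup ((fun x => ⟪x, v⟫) '' K) - sInf ((fun x => ⟪x, v⟫) '' K)

/-- `r_n = 5` if `n ≡ 1, 2 (mod 4)`, `4` if `n ≡ 0 (mod 4)`, `3` if `n ≡ 3 (mod 4)`. -/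
def flipStiefelR (n : ℕ) : ℕ :=
  if n % 4 = 0 then 4 else if n % 4 = 3 then 3 else 5

/-!
Orthonormal pairs are chosen one at a time, each in the orthogonal complement of the previous ones.
Within a space of dimension `d`, fix a unit vector `u`; as the unit vector `w ⊥ u` varies, the
differences of widths in the directions `(u ± w) / √2` are odd functions of `w` on a
`(d - 2)`-sphere, so by Borsuk–Ulam `d - 2` of them vanish simultaneously. After two pairs
`d = n - 4`, hence three pairs exist for up to `n - 6` regions, and
`⌊(n - r_n - 1) / 3⌋ ≤ n - 6`.

Borsuk–Ulam is proved on iterated barycentric subdivisions of the boundary of a cross-polytope.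
Label the vertices by the signs of the given odd functions. The cup product of these labellings is
a mod 2 cochain whose value on the fundamental cycle is `1`, by splitting the sphere into two
antipodal hemispheres and descending to the equator. Filling the equator by a hemisphere, some
simplex must therefore see a sign change of every function, and such simplices accumulate at a
common zero.
-/

/-- Mod 2 chains of ordered simplices with vertices in `E`. A simplex is the list of its vertices,
in order and possibly with repetitions; the empty list is the `(-1)`-simplex of the augmented
complex. -/
abbrev SimplicialChain (E : Type*) : Type _ := List E →₀ ZMod 2

namespace SimplicialChain

open Finsupp (single)

section Boundary

variable {E F : Type*}

/-- The cone with apex `x`, putting `x` in front of the vertices of each simplex. -/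
noncomputable def cone (x : E) : SimplicialChain E →ₗ[ZMod 2] SimplicialChain E :=
  Finsupp.lmapDomain (ZMod 2) (ZMod 2) (List.cons x)

/-- The sum of the codimension-one faces of a simplex. -/
noncomputable def faces : List E → SimplicialChain E
  | [] => 0
  | x :: l => single l 1 + cone x (faces l)

/-- The augmented mod 2 boundary operator. -/
noncomputable def boundary : SimplicialChain E →ₗ[ZMod 2] SimplicialChain E :=
  Finsupp.linearCombination (ZMod 2) faces

/-- The chain map induced by a map on vertices. -/
noncomputable def pushforward (φ : E → F) : SimplicialChain E →ₗ[ZMod 2] SimplicialChain F :=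
  Finsupp.lmapDomain (ZMod 2) (ZMod 2) (List.map φ)

@[simp]
lemma cone_single (x : E) (l : List E) : cone x (single l 1) = single (x :: l) 1 := by
  simp [cone]

@[simp]
lemma boundary_single (l : List E) : boundary (single l 1) = faces l := by
  simp [boundary]

@[simp]
lemma pushforward_single (φ : E → F) (l : List E) :
    pushforward φ (single l 1) = single (l.map φ) 1 := by
  simp [pushforward]

lemma linearMap_ext {M : Type*} [AddCommMonoid M] [Module (ZMod 2) M]
    {f g : SimplicialChain E →ₗ[ZMod 2] M} (h : ∀ l, f (single l 1) = g (single l 1)) : f = g :=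
  Finsupp.lhom_ext' fun l ↦ LinearMap.ext_ring (h l)

lemma add_self (c : SimplicialChain E) : c + c = 0 := by
  ext l
  exact CharTwo.add_self_eq_zero (c l)

lemma boundary_cone (x : E) (c : SimplicialChain E) :
    boundary (cone x c) = c + cone x (boundary c) := by
  suffices boundary ∘ₗ cone x = LinearMap.id + cone x ∘ₗ boundary from LinearMap.congr_fun this c
  refine linearMap_ext fun l ↦ ?_
  simp [faces]

lemma boundary_faces (l : List E) : boundary (faces l) = 0 := by
  induction l with
  | nil => simp [faces]
  | cons x l ih => simp [faces, boundary_cone, ih, add_self]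

lemma boundary_boundary (c : SimplicialChain E) : boundary (boundary c) = 0 := by
  suffices boundary ∘ₗ boundary = (0 : SimplicialChain E →ₗ[ZMod 2] SimplicialChain E) from
    LinearMap.congr_fun this c
  exact linearMap_ext fun l ↦ by simp [boundary_faces]

lemma pushforward_cone (φ : E → F) (x : E) (c : SimplicialChain E) :
    pushforward φ (cone x c) = cone (φ x) (pushforward φ c) := by
  suffices pushforward φ ∘ₗ cone x = cone (φ x) ∘ₗ pushforward φ from LinearMap.congr_fun this c
  exact linearMap_ext fun l ↦ by simp

lemma pushforward_faces (φ : E → F) (l : List E) :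
    pushforward φ (faces l) = faces (l.map φ) := by
  induction l with
  | nil => simp [faces]
  | cons x l ih => simp [faces, pushforward_cone, ih]

end Boundary

section Support

variable {E : Type*}

/-- The chains all of whose simplices belong to `S`. -/
noncomputable abbrev chainsOn (S : Set (List E)) : Submodule (ZMod 2) (SimplicialChain E) :=
  Finsupp.supported (ZMod 2) (ZMod 2) S

/-- The simplices all of whose vertices belong to `X`. -/
def simplicesIn (X : Set E) : Set (List E) := {l | ∀ x ∈ l, x ∈ X}

lemma single_mem_chainsOn {S : Set (List E)} {l : List E} (hl : l ∈ S) :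
    single l 1 ∈ chainsOn S :=
  Finsupp.single_mem_supported (ZMod 2) 1 hl

lemma map_mem_of_mem_chainsOn {M : Type*} [AddCommMonoid M] [Module (ZMod 2) M]
    {f : SimplicialChain E →ₗ[ZMod 2] M} {S : Set (List E)} {p : Submodule (ZMod 2) M}
    (h : ∀ l ∈ S, f (single l 1) ∈ p) {c : SimplicialChain E}
    (hc : c ∈ chainsOn S) : f c ∈ p := by
  have hle : chainsOn S ≤ p.comap f := by
    rw [chainsOn, Finsupp.supported_eq_span_single, Submodule.span_le]
    rintro _ ⟨l, hl, rfl⟩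
    exact h l hl
  exact hle hc

lemma cone_mem_chainsOn {x : E} {S T : Set (List E)} (h : ∀ l ∈ S, x :: l ∈ T)
    {c : SimplicialChain E} (hc : c ∈ chainsOn S) :
    cone x c ∈ chainsOn T :=
  map_mem_of_mem_chainsOn
    (fun l hl ↦ by simpa using single_mem_chainsOn (h l hl)) hc

lemma eqOn_chainsOn {M : Type*} [AddCommGroup M] [Module (ZMod 2) M]
    {f g : SimplicialChain E →ₗ[ZMod 2] M} {S : Set (List E)}
    (h : ∀ l ∈ S, f (single l 1) = g (single l 1)) {c : SimplicialChain E}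
    (hc : c ∈ chainsOn S) : f c = g c := by
  have := map_mem_of_mem_chainsOn (f := f - g) (p := ⊥)
    (fun l hl ↦ by simp [h l hl]) hc
  simpa [sub_eq_zero] using this

lemma faces_mem_chainsOn (l : List E) :
    faces l ∈ chainsOn {t | t.Sublist l ∧ t.length + 1 = l.length} := by
  induction l with
  | nil => simp [faces]
  | cons x l ih =>
    refine add_mem (single_mem_chainsOn (by simp)) (cone_mem_chainsOn ?_ ih)
    rintro t ⟨hsub, hlen⟩
    exact ⟨hsub.cons_cons x, by simp [hlen]⟩

lemma boundary_mem_chainsOn_simplicesIn {X : Set E} {c : SimplicialChain E}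
    (hc : c ∈ chainsOn (simplicesIn X)) :
    boundary c ∈ chainsOn (simplicesIn X) := by
  refine map_mem_of_mem_chainsOn (fun l hl ↦ ?_) hc
  rw [boundary_single]
  refine Finsupp.supported_mono ?_ (faces_mem_chainsOn l)
  exact fun t ht x hx ↦ hl x (ht.1.subset hx)

end Support

section SignCochain

variable {E : Type*}

/-- The cochain attached to the vertex labellings `a₁, …, aₖ : E → ℤ/2`. It is the cup product of
the labelling `a₁` with the `1`-cocycles `δa₂, …, δaₖ`, written recursively so that its value on a
simplex is the label of the first vertex times the coboundary of the cochain of `a₂, …, aₖ`. -/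
noncomputable def signCochain : List (E → ZMod 2) → (SimplicialChain E →ₗ[ZMod 2] ZMod 2)
  | [] => Finsupp.lapply []
  | a :: as => Finsupp.linearCombination (ZMod 2) fun l ↦
      (l.head?.elim 0 a) * signCochain as (faces l)

lemma signCochain_cons_nil (a : E → ZMod 2) (as : List (E → ZMod 2)) :
    signCochain (a :: as) (single [] 1) = 0 := by
  simp [signCochain]

lemma signCochain_cons_cons (a : E → ZMod 2) (as : List (E → ZMod 2)) (x : E) (l : List E) :
    signCochain (a :: as) (single (x :: l) 1) = a x * signCochain as (faces (x :: l)) := by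
  simp [signCochain]

lemma signCochain_cons_of_const {a : E → ZMod 2} {as : List (E → ZMod 2)} {X : Set E} {ε : ZMod 2}
    (ha : ∀ x ∈ X, a x = ε) {c : SimplicialChain E}
    (hc : c ∈ chainsOn (simplicesIn X)) :
    signCochain (a :: as) c = ε * signCochain as (boundary c) := by
  refine eqOn_chainsOn (g := ε • signCochain as ∘ₗ boundary) (fun l hl ↦ ?_) hc
  cases l with
  | nil => simp [signCochain_cons_nil, faces]
  | cons x l => simp [signCochain_cons_cons, ha x (hl x (by simp))]

-- If `a` is constant on `X`, then on `X` the cochain of `a :: as` is a multiple of a coboundary.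
lemma signCochain_boundary_eq_zero_of_const {as : List (E → ZMod 2)} {X : Set E}
    {a : E → ZMod 2} (ha : a ∈ as) (hconst : ∀ x ∈ X, ∀ y ∈ X, a x = a y) {c : SimplicialChain E}
    (hc : c ∈ chainsOn (simplicesIn X)) :
    signCochain as (boundary c) = 0 := by
  induction ha generalizing c with
  | head as =>
    obtain ⟨ε, hε⟩ : ∃ ε, ∀ x ∈ X, a x = ε := by
      rcases X.eq_empty_or_nonempty with rfl | ⟨y, hy⟩
      · exact ⟨0, by simp⟩
      · exact ⟨a y, fun x hx ↦ hconst x hx y hy⟩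
    rw [signCochain_cons_of_const hε (boundary_mem_chainsOn_simplicesIn hc), boundary_boundary,
      map_zero, mul_zero]
  | tail b _ ih =>
    refine eqOn_chainsOn (g := 0) (fun l hl ↦ ?_) (boundary_mem_chainsOn_simplicesIn hc)
    cases l with
    | nil => simp [signCochain_cons_nil]
    | cons x l =>
      have hl_zero := ih (single_mem_chainsOn hl)
      rw [boundary_single] at hl_zero
      rw [signCochain_cons_cons, hl_zero, mul_zero, LinearMap.zero_apply]

lemma signCochain_nil_pushforward {F : Type*} (φ : E → F) (c : SimplicialChain E) :
    signCochain [] (pushforward φ c) = signCochain [] c := by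
  suffices signCochain [] ∘ₗ pushforward φ = signCochain [] from LinearMap.congr_fun this c
  exact linearMap_ext fun l ↦ by simp [signCochain, Finsupp.single_apply]

variable [Neg E] {X : Set E}

lemma signCochain_cons_add_neg_of_invariant {a : E → ZMod 2} {as : List (E → ZMod 2)}
    (ha : ∀ x ∈ X, a (-x) = a x + 1)
    (hinv : ∀ c ∈ chainsOn (simplicesIn X),
      signCochain as (pushforward Neg.neg (boundary c)) = signCochain as (boundary c))
    {c : SimplicialChain E} (hc : c ∈ chainsOn (simplicesIn X)) :
    signCochain (a :: as) (c + pushforward Neg.neg c) = signCochain as (boundary c) := by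
  refine eqOn_chainsOn (f := signCochain (a :: as) ∘ₗ (LinearMap.id + pushforward Neg.neg))
    (g := signCochain as ∘ₗ boundary) (fun l hl ↦ ?_) hc
  cases l with
  | nil => simp [signCochain_cons_nil, faces]
  | cons x l =>
    have hfaces := hinv _ (single_mem_chainsOn hl)
    rw [boundary_single, pushforward_faces, List.map_cons] at hfaces
    have hx : a x + a (-x) = 1 := by
      rw [ha x (hl x (by simp)), ← add_assoc, CharTwo.add_self_eq_zero, zero_add]
    simp [signCochain_cons_cons, hfaces, ← add_mul, hx]

lemma signCochain_pushforward_neg_boundary {as : List (E → ZMod 2)}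
    (has : ∀ a ∈ as, ∀ x ∈ X, a (-x) = a x + 1) {c : SimplicialChain E}
    (hc : c ∈ chainsOn (simplicesIn X)) :
    signCochain as (pushforward Neg.neg (boundary c)) = signCochain as (boundary c) := by
  induction as generalizing c with
  | nil => exact signCochain_nil_pushforward _ _
  | cons a as ih =>
    rw [List.forall_mem_cons] at has
    have hsum := signCochain_cons_add_neg_of_invariant has.1 (fun _ ↦ ih has.2)
      (boundary_mem_chainsOn_simplicesIn hc)
    rw [boundary_boundary, map_zero, map_add] at hsum
    exact (CharTwo.add_eq_zero.mp hsum).symm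

lemma signCochain_cons_add_neg {a : E → ZMod 2} {as : List (E → ZMod 2)}
    (has : ∀ b ∈ a :: as, ∀ x ∈ X, b (-x) = b x + 1) {c : SimplicialChain E}
    (hc : c ∈ chainsOn (simplicesIn X)) :
    signCochain (a :: as) (c + pushforward Neg.neg c) = signCochain as (boundary c) := by
  rw [List.forall_mem_cons] at has
  exact signCochain_cons_add_neg_of_invariant has.1
    (fun _ ↦ signCochain_pushforward_neg_boundary has.2) hc

end SignCochain

section Subdivision

variable {E F : Type*} [AddCommGroup E] [Module ℝ E] [AddCommGroup F] [Module ℝ F]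

/-- The barycenter of the vertices of a simplex; it is `0` for the empty simplex. -/
noncomputable def barycenter (l : List E) : E := (l.length : ℝ)⁻¹ • l.sum

/-- Barycentric subdivision of simplices with `n` vertices. The number of vertices is a parameter
in order to make the recursion structural; other simplices are sent to irrelevant chains. -/
noncomputable def subdivide : ℕ → (SimplicialChain E →ₗ[ZMod 2] SimplicialChain E)
  | 0 => LinearMap.id
  | n + 1 => Finsupp.linearCombination (ZMod 2) fun l ↦
      cone (barycenter l) (subdivide n (faces l))

lemma subdivide_succ_single (n : ℕ) (l : List E) :
    subdivide (n + 1) (single l 1) = cone (barycenter l) (subdivide n (faces l)) := by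
  simp [subdivide]

lemma boundary_subdivide (n : ℕ) (c : SimplicialChain E) :
    boundary (subdivide (n + 1) c) = subdivide n (boundary c) := by
  suffices boundary ∘ₗ subdivide (n + 1) =
      subdivide n ∘ₗ (boundary : SimplicialChain E →ₗ[ZMod 2] SimplicialChain E) from
    LinearMap.congr_fun this c
  refine linearMap_ext fun l ↦ ?_
  have hcycle : boundary (subdivide n (faces l)) = 0 := by
    cases n with
    | zero => exact boundary_faces l
    | succ n => rw [boundary_subdivide n, boundary_faces, map_zero]
  simp [subdivide_succ_single, boundary_cone, hcycle]

lemma barycenter_map (f : E →ₗ[ℝ] F) (l : List E) : barycenter (l.map f) = f (barycenter l) := by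
  simp [barycenter, map_list_sum]

lemma pushforward_subdivide (f : E →ₗ[ℝ] F) (n : ℕ) (c : SimplicialChain E) :
    pushforward f (subdivide n c) = subdivide n (pushforward f c) := by
  induction n generalizing c with
  | zero => rfl
  | succ n ih =>
    suffices pushforward f ∘ₗ subdivide (n + 1) = subdivide (n + 1) ∘ₗ pushforward f from
      LinearMap.congr_fun this c
    refine linearMap_ext fun l ↦ ?_
    simp [subdivide_succ_single, pushforward_cone, ih, pushforward_faces, barycenter_map]

lemma boundary_subdivide_pow (n N : ℕ) (c : SimplicialChain E) :
    boundary ((subdivide (n + 1) ^ N) c) = (subdivide n ^ N) (boundary c) := by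
  simp only [Module.End.pow_apply]
  exact Function.Semiconj.iterate_right (boundary_subdivide n) N c

lemma pushforward_neg_subdivide_pow (n N : ℕ) (c : SimplicialChain E) :
    pushforward Neg.neg ((subdivide n ^ N) c) = (subdivide n ^ N) (pushforward Neg.neg c) := by
  simp only [Module.End.pow_apply]
  exact Function.Semiconj.iterate_right (pushforward_subdivide (-LinearMap.id) n) N c

lemma barycenter_eq_sum (l : List E) :
    barycenter l = ∑ i : Fin l.length, (l.length : ℝ)⁻¹ • l[i] := by
  rw [barycenter, ← Finset.smul_sum]
  simp

lemma barycenter_mem {C : Set E} (hC : Convex ℝ C) {l : List E} (hl : l ≠ [])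
    (hlC : l ∈ simplicesIn C) : barycenter l ∈ C := by
  have hlength : (l.length : ℝ) ≠ 0 := by simpa using hl
  rw [barycenter_eq_sum]
  exact hC.sum_mem (fun _ _ ↦ by positivity) (by simp [hlength]) (fun i _ ↦ hlC _ (by simp))

end Subdivision

section Mesh

variable {E : Type*} [PseudoMetricSpace E]

/-- The simplices with `n` vertices, all in `X` and at mutual distance at most `r`. -/
def fineSimplicesIn (X : Set E) (r : ℝ) (n : ℕ) : Set (List E) :=
  {l | l.length = n ∧ l ∈ simplicesIn X ∧ ∀ x ∈ l, ∀ y ∈ l, dist x y ≤ r}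

lemma cons_mem_fineSimplicesIn {C : Set E} {r : ℝ} (hr : 0 ≤ r) {n : ℕ} {x : E} (hx : x ∈ C)
    {t : List E} (ht : t ∈ fineSimplicesIn (C ∩ Metric.closedBall x r) r n) :
    x :: t ∈ fineSimplicesIn C r (n + 1) := by
  obtain ⟨hlen, htC, hdist⟩ := ht
  refine ⟨by simp [hlen], List.forall_mem_cons.2 ⟨hx, fun y hy ↦ (htC y hy).1⟩, ?_⟩
  simp only [List.forall_mem_cons, dist_self]
  exact ⟨⟨hr, fun y hy ↦ Metric.mem_closedBall'.1 (htC y hy).2⟩,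
    fun y hy ↦ ⟨(htC y hy).2, hdist y hy⟩⟩

end Mesh

section MeshSubdivision

variable {E : Type*} [SeminormedAddCommGroup E] [NormedSpace ℝ E]

lemma dist_barycenter_le {l : List E} {r : ℝ} (hr : ∀ x ∈ l, ∀ y ∈ l, dist x y ≤ r) {y : E}
    (hy : y ∈ l) : dist (barycenter l) y ≤ (1 - (l.length : ℝ)⁻¹) * r := by
  obtain ⟨i, hi, rfl⟩ := List.getElem_of_mem hy
  let k : Fin l.length := ⟨i, hi⟩
  have hpos : 0 < l.length := List.length_pos_of_mem hy
  have hlength : (l.length : ℝ) ≠ 0 := by positivity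
  have hsub : barycenter l - l[k] = (l.length : ℝ)⁻¹ • ∑ j : Fin l.length, (l[j] - l[k]) := by
    rw [barycenter_eq_sum, ← Finset.smul_sum, Finset.sum_sub_distrib, smul_sub]
    simp [← Nat.cast_smul_eq_nsmul ℝ, hlength]
  -- The term of `l[k]` itself vanishes: this is what makes the factor smaller than `1`.
  have hsum : ‖∑ j : Fin l.length, (l[j] - l[k])‖ ≤ (l.length - 1) * r := by
    rw [← Finset.sum_erase (a := k) Finset.univ (sub_self _)]
    refine (norm_sum_le_of_le _ fun j _ ↦ ?_).trans_eq
      (b := ∑ _j ∈ Finset.univ.erase k, r) ?_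
    · rw [← dist_eq_norm]
      exact hr _ (by simp) _ (by simp)
    · simp [Nat.cast_sub hpos]
  calc dist (barycenter l) l[k]
      = (l.length : ℝ)⁻¹ * ‖∑ j : Fin l.length, (l[j] - l[k])‖ := by
        rw [dist_eq_norm, hsub, norm_smul, norm_inv, RCLike.norm_natCast]
    _ ≤ (l.length : ℝ)⁻¹ * ((l.length - 1) * r) := by gcongr
    _ = (1 - (l.length : ℝ)⁻¹) * r := by field_simp

lemma faces_mem_chainsOn_fineSimplicesIn {C : Set E} {r : ℝ} {n : ℕ} {l : List E}
    (hl : l ∈ fineSimplicesIn C r (n + 1)) :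
    faces l ∈ chainsOn (fineSimplicesIn
      (C ∩ Metric.closedBall (barycenter l) (n / (n + 1) * r)) r n) := by
  obtain ⟨hlen, hlC, hdist⟩ := hl
  refine Finsupp.supported_mono ?_ (faces_mem_chainsOn l)
  rintro t ⟨hsub, htlen⟩
  refine ⟨by omega, fun x hx ↦ ⟨hlC x (hsub.subset hx), ?_⟩,
    fun x hx y hy ↦ hdist x (hsub.subset hx) y (hsub.subset hy)⟩
  have hbary := dist_barycenter_le hdist (hsub.subset hx)
  rw [Metric.mem_closedBall']
  convert hbary using 2
  rw [hlen]
  push_cast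
  field_simp
  ring

lemma subdivide_mem_chainsOn_fineSimplicesIn {C : Set E} (hC : Convex ℝ C) {r : ℝ} (hr : 0 ≤ r)
    {n : ℕ} {c : SimplicialChain E} (hc : c ∈ chainsOn (fineSimplicesIn C r n)) :
    subdivide n c ∈ chainsOn (fineSimplicesIn C (n / (n + 1) * r) n) := by
  induction n generalizing C c with
  | zero =>
    refine Finsupp.supported_mono ?_ hc
    rintro l ⟨hlen, hlC, -⟩
    obtain rfl := List.length_eq_zero_iff.1 hlen
    exact ⟨rfl, hlC, by simp⟩
  | succ n ih =>
    refine map_mem_of_mem_chainsOn (fun l hl ↦ ?_) hc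
    have hne : l ≠ [] := List.ne_nil_of_length_eq_add_one hl.1
    have hfaces := ih (hC.inter (convex_closedBall _ _)) (faces_mem_chainsOn_fineSimplicesIn hl)
    rw [subdivide_succ_single]
    refine cone_mem_chainsOn (fun t ht ↦ ?_) hfaces
    obtain ⟨hlen, htC, hdist⟩ := cons_mem_fineSimplicesIn (by positivity)
      (barycenter_mem hC hne hl.2.1) ht
    refine ⟨hlen, htC, fun x hx y hy ↦ (hdist x hx y hy).trans ?_⟩
    gcongr ?_ * r
    rw [div_le_div_iff₀ (by positivity) (by positivity)]
    push_cast
    nlinarith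

lemma subdivide_pow_mem_chainsOn_fineSimplicesIn {C : Set E} (hC : Convex ℝ C) {r : ℝ}
    (hr : 0 ≤ r) {n : ℕ} (N : ℕ) {c : SimplicialChain E}
    (hc : c ∈ chainsOn (fineSimplicesIn C r n)) :
    (subdivide n ^ N) c ∈ chainsOn (fineSimplicesIn C ((n / (n + 1)) ^ N * r) n) := by
  induction N with
  | zero => simpa using hc
  | succ N ih =>
    rw [pow_succ' (subdivide n), Module.End.mul_apply, pow_succ' (_ / _), mul_assoc]
    exact subdivide_mem_chainsOn_fineSimplicesIn hC (by positivity) ih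

end MeshSubdivision

section OctahedralSphere

variable {E : Type*} [AddCommGroup E]

/-- The fundamental cycle of the boundary of the cross-polytope with vertices `±e i`. -/
noncomputable def octahedralSphere : {n : ℕ} → (Fin n → E) → SimplicialChain E
  | 0, _ => single [] 1
  | _ + 1, e => cone (e 0) (octahedralSphere (Fin.tail e)) +
      cone (-e 0) (octahedralSphere (Fin.tail e))

lemma boundary_octahedralSphere {n : ℕ} (e : Fin n → E) : boundary (octahedralSphere e) = 0 := by
  induction n with
  | zero => simp [octahedralSphere, faces]
  | succ n ih => simp [octahedralSphere, boundary_cone, ih, add_self]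

lemma pushforward_neg_octahedralSphere {n : ℕ} (e : Fin n → E) :
    pushforward Neg.neg (octahedralSphere e) = octahedralSphere e := by
  induction n with
  | zero => simp [octahedralSphere]
  | succ n ih => simp [octahedralSphere, pushforward_cone, ih, add_comm]

lemma octahedralSphere_succ_eq_cone_add_neg {n : ℕ} (e : Fin (n + 1) → E) :
    octahedralSphere e = cone (e 0) (octahedralSphere (Fin.tail e)) +
      pushforward Neg.neg (cone (e 0) (octahedralSphere (Fin.tail e))) := by
  rw [pushforward_cone, pushforward_neg_octahedralSphere, octahedralSphere]

lemma boundary_cone_octahedralSphere {n : ℕ} (x : E) (e : Fin n → E) :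
    boundary (cone x (octahedralSphere e)) = octahedralSphere e := by
  rw [boundary_cone, boundary_octahedralSphere, map_zero, add_zero]

/-- The simplices with `n` vertices spanning a, possibly degenerate, face of the cross-polytope with
vertices `±e i`: no two of their vertices are antipodal. -/
def octahedronFacets {n : ℕ} (e : Fin n → E) : Set (List E) :=
  {l | l.length = n ∧ ∃ s : Fin n → ℤˣ, l ∈ simplicesIn (Set.range (s • e))}

lemma cons_mem_octahedronFacets {n : ℕ} {e : Fin (n + 1) → E} (u : ℤˣ) {l : List E}
    (hl : l ∈ octahedronFacets (Fin.tail e)) : (u • e 0) :: l ∈ octahedronFacets e := by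
  obtain ⟨hlen, s, hs⟩ := hl
  refine ⟨by simp [hlen], Fin.cons u s, List.forall_mem_cons.2 ⟨⟨0, rfl⟩, fun x hx ↦ ?_⟩⟩
  obtain ⟨i, rfl⟩ := hs x hx
  exact ⟨i.succ, rfl⟩

lemma octahedralSphere_mem_chainsOn {n : ℕ} (e : Fin n → E) :
    octahedralSphere e ∈ chainsOn (octahedronFacets e) := by
  induction n with
  | zero => exact single_mem_chainsOn ⟨rfl, 1, by simp [simplicesIn]⟩
  | succ n ih =>
    have hcone (u : ℤˣ) := cone_mem_chainsOn
      (fun l hl ↦ cons_mem_octahedronFacets (e := e) u hl) (ih (Fin.tail e))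
    simpa [octahedralSphere] using add_mem (hcone 1) (hcone (-1))

lemma cone_octahedralSphere_mem_chainsOn {n : ℕ} (e : Fin (n + 1) → E) :
    cone (e 0) (octahedralSphere (Fin.tail e)) ∈ chainsOn (octahedronFacets e) :=
  cone_mem_chainsOn (fun l hl ↦ by simpa using cons_mem_octahedronFacets (e := e) 1 hl)
    (octahedralSphere_mem_chainsOn _)

end OctahedralSphere

section Octahedron

variable {E : Type*} [AddCommGroup E] [Module ℝ E] {n : ℕ}

/-- The boundary of the cross-polytope with vertices `±e i`, as a union of facets. -/
def octahedron (e : Fin n → E) : Set E :=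
  ⋃ s : Fin n → ℤˣ, convexHull ℝ (Set.range (s • e))

lemma convexHull_subset_octahedron (e : Fin n → E) (s : Fin n → ℤˣ) :
    convexHull ℝ (Set.range (s • e)) ⊆ octahedron e :=
  Set.subset_iUnion (fun s : Fin n → ℤˣ ↦ convexHull ℝ (Set.range (s • e))) s

lemma octahedron_tail_subset (e : Fin (n + 1) → E) : octahedron (Fin.tail e) ⊆ octahedron e := by
  refine Set.iUnion_subset fun s ↦ ?_
  refine (convexHull_mono ?_).trans (convexHull_subset_octahedron e (Fin.cons 1 s))
  rintro _ ⟨i, rfl⟩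
  exact ⟨i.succ, rfl⟩

lemma zero_notMem_octahedron {e : Fin n → E} (he : LinearIndependent ℝ e) :
    (0 : E) ∉ octahedron e := by
  rw [octahedron, Set.mem_iUnion]
  rintro ⟨s, hs⟩
  obtain ⟨f, hf⟩ := Module.exists_dual_forall_apply_eq_one
    (linearIndepOn_univ_iff.2 (he.group_smul s))
  have hsub : convexHull ℝ (Set.range (s • e)) ⊆ f ⁻¹' {1} := by
    refine convexHull_min ?_ ((convex_singleton 1).linear_preimage f)
    rintro _ ⟨i, rfl⟩
    exact hf i (Set.mem_univ i)
  simpa using hsub hs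

end Octahedron

section OctahedronSubdivision

variable {E : Type*} [NormedAddCommGroup E] [NormedSpace ℝ E] {n : ℕ}

lemma isCompact_octahedron (e : Fin n → E) : IsCompact (octahedron e) :=
  isCompact_iUnion fun _ ↦ (Set.finite_range _).isCompact_convexHull ℝ

lemma subdivide_pow_mem_chainsOn_octahedron {e : Fin n → E} (N : ℕ) {c : SimplicialChain E}
    (hc : c ∈ chainsOn (octahedronFacets e)) :
    (subdivide n ^ N) c ∈ chainsOn (fineSimplicesIn (octahedron e)
      ((n / (n + 1)) ^ N * Metric.diam (octahedron e)) n) := by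
  refine map_mem_of_mem_chainsOn ?_ hc
  rintro l ⟨hlen, s, hs⟩
  have hfacet := convexHull_subset_octahedron e s
  have hl : l ∈ simplicesIn (convexHull ℝ (Set.range (s • e))) :=
    fun x hx ↦ subset_convexHull ℝ _ (hs x hx)
  have hdist : ∀ x ∈ l, ∀ y ∈ l, dist x y ≤ Metric.diam (octahedron e) := fun x hx y hy ↦
    Metric.dist_le_diam_of_mem (isCompact_octahedron e).isBounded (hfacet (hl x hx))
      (hfacet (hl y hy))
  refine Finsupp.supported_mono ?_ (subdivide_pow_mem_chainsOn_fineSimplicesIn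
    (convex_convexHull ℝ _) Metric.diam_nonneg N (single_mem_chainsOn ⟨hlen, hl, hdist⟩))
  rintro t ⟨htlen, ht, htdist⟩
  exact ⟨htlen, fun x hx ↦ hfacet (ht x hx), htdist⟩

lemma exists_subdivide_pow_mem_chainsOn_octahedron (e : Fin n → E) {r : ℝ} (hr : 0 < r) :
    ∃ N : ℕ, ∀ c ∈ chainsOn (octahedronFacets e),
      (subdivide n ^ N) c ∈ chainsOn (fineSimplicesIn (octahedron e) r n) := by
  have hlt : (n / (n + 1) : ℝ) < 1 := by
    rw [div_lt_one (by positivity)]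
    exact lt_add_one _
  have htendsto : Filter.Tendsto
      (fun N : ℕ ↦ (n / (n + 1) : ℝ) ^ N * Metric.diam (octahedron e)) Filter.atTop (nhds 0) := by
    simpa using (tendsto_pow_atTop_nhds_zero_of_lt_one (by positivity) hlt).mul_const _
  obtain ⟨N, hN⟩ := (htendsto.eventually_le_const hr).exists
  refine ⟨N, fun c hc ↦ Finsupp.supported_mono ?_ (subdivide_pow_mem_chainsOn_octahedron N hc)⟩
  exact fun l ⟨hlen, hl, hdist⟩ ↦ ⟨hlen, hl, fun x hx y hy ↦ (hdist x hx y hy).trans hN⟩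

lemma signCochain_subdivide_pow_octahedralSphere {as : List (E → ZMod 2)}
    {e : Fin as.length → E} (has : ∀ a ∈ as, ∀ x ∈ octahedron e, a (-x) = a x + 1) (N : ℕ) :
    signCochain as ((subdivide as.length ^ N) (octahedralSphere e)) = 1 := by
  induction as with
  | nil =>
    have hid : (subdivide 0 : SimplicialChain E →ₗ[ZMod 2] SimplicialChain E) = 1 := rfl
    simp [hid, octahedralSphere, signCochain]
  | cons a as ih =>
    have hcone : (subdivide (as.length + 1) ^ N) (cone (e 0) (octahedralSphere (Fin.tail e))) ∈
        chainsOn (simplicesIn (octahedron e)) :=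
      Finsupp.supported_mono (fun _ hl ↦ hl.2.1)
        (subdivide_pow_mem_chainsOn_octahedron N (cone_octahedralSphere_mem_chainsOn e))
    rw [octahedralSphere_succ_eq_cone_add_neg, List.length_cons, map_add,
      ← pushforward_neg_subdivide_pow, signCochain_cons_add_neg has hcone,
      boundary_subdivide_pow, boundary_cone_octahedralSphere]
    exact ih fun b hb x hx ↦ has b (List.mem_cons_of_mem a hb) x (octahedron_tail_subset e hx)

theorem exists_fine_simplex_forall_label_ne {as : List (E → ZMod 2)} (hn : as.length = n)
    {e : Fin (n + 1) → E} (has : ∀ a ∈ as, ∀ x ∈ octahedron e, a (-x) = a x + 1) {r : ℝ}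
    (hr : 0 < r) :
    ∃ l ∈ fineSimplicesIn (octahedron e) r (n + 1), ∀ a ∈ as, ∃ x ∈ l, ∃ y ∈ l, a x ≠ a y := by
  subst hn
  obtain ⟨N, hN⟩ := exists_subdivide_pow_mem_chainsOn_octahedron e hr
  have hball := hN _ (cone_octahedralSphere_mem_chainsOn e)
  have hboundary : signCochain as (boundary ((subdivide (as.length + 1) ^ N)
      (cone (e 0) (octahedralSphere (Fin.tail e))))) = 1 := by
    rw [boundary_subdivide_pow, boundary_cone_octahedralSphere]
    exact signCochain_subdivide_pow_octahedralSphere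
      (fun a ha x hx ↦ has a ha x (octahedron_tail_subset e hx)) N
  by_contra! hconst
  refine one_ne_zero (hboundary.symm.trans ?_)
  refine eqOn_chainsOn (f := signCochain as ∘ₗ boundary) (g := 0) (fun l hl ↦ ?_) hball
  obtain ⟨a, ha, haconst⟩ := hconst l hl
  exact signCochain_boundary_eq_zero_of_const (X := {x | x ∈ l}) ha haconst
    (single_mem_chainsOn fun x hx ↦ hx)

end OctahedronSubdivision

end SimplicialChain

section BorsukUlam

open SimplicialChain

lemma exists_odd_label {E : Type*} [InvolutiveNeg E] {X : Set E} (hX : ∀ x ∈ X, -x ≠ x)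
    {f : E → ℝ} (hf : ∀ x ∈ X, f (-x) = -f x) :
    ∃ a : E → ZMod 2, (∀ x ∈ X, a (-x) = a x + 1) ∧ ∀ x y, 0 < f x * f y → a x = a y := by
  classical
  -- At a zero of `f`, a well-order decides which of `x` and `-x` gets the label `1`.
  refine ⟨fun x ↦ if 0 < f x ∨ f x = 0 ∧ WellOrderingRel x (-x) then 1 else 0,
    fun x hx ↦ ?_, fun x y hxy ↦ ?_⟩
  · have hone : (1 + 1 : ZMod 2) = 0 := rfl
    rcases lt_trichotomy (f x) 0 with hneg | hzero | hpos
    · simp [hf x hx, hneg, hneg.not_gt, hneg.ne]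
    · rcases trichotomous_of WellOrderingRel x (-x) with hlt | heq | hgt
      · simp [hf x hx, hzero, hlt, asymm_of WellOrderingRel hlt, hone]
      · exact absurd heq.symm (hX x hx)
      · simp [hf x hx, hzero, hgt, asymm_of WellOrderingRel hgt]
    · simp [hf x hx, hpos, hpos.not_gt, hpos.ne', hone]
  · rcases pos_and_pos_or_neg_and_neg_of_mul_pos hxy with ⟨hx, hy⟩ | ⟨hx, hy⟩
    · simp [hx, hy]
    · simp [hx.not_gt, hx.ne, hy.not_gt, hy.ne]

variable {E ι : Type*} [NormedAddCommGroup E] [NormedSpace ℝ E] [Fintype ι] {f : ι → E → ℝ}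

theorem exists_mem_octahedron_forall_eq_zero {e : Fin (Fintype.card ι + 1) → E}
    (he : LinearIndependent ℝ e) (hf : ∀ i, ContinuousOn (f i) (octahedron e))
    (hodd : ∀ i, ∀ x ∈ octahedron e, f i (-x) = -f i x) :
    ∃ x ∈ octahedron e, ∀ i, f i x = 0 := by
  by_contra! hne
  choose i hi using hne
  have : IsAddTorsionFree E := .of_isTorsionFree ℝ E
  have hneg : ∀ x ∈ octahedron e, -x ≠ x := fun x hx h ↦
    zero_notMem_octahedron he (self_eq_neg.1 h.symm ▸ hx)
  choose a ha hlabel using fun i ↦ exists_odd_label hneg (hodd i)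
  have hnhds : ∀ x hx, {y | 0 < f (i x hx) x * f (i x hx) y} ∈ nhdsWithin x (octahedron e) :=
    fun x hx ↦ ((hf _ x hx).const_mul _).eventually_const_lt (mul_self_pos.2 (hi x hx))
  obtain ⟨r, hr, hcover⟩ := Metric.uniformity_basis_dist_le.lebesgue_number_lemma_nhdsWithin'
    (isCompact_octahedron e) hnhds
  obtain ⟨l, ⟨hlen, hl, hdist⟩, hchange⟩ := exists_fine_simplex_forall_label_ne
    (as := Finset.univ.toList.map a) (e := e) (by simp) (by simpa using ha) hr
  obtain ⟨x, hx⟩ := List.exists_mem_of_length_pos (hlen ▸ Nat.succ_pos _ : 0 < l.length)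
  obtain ⟨⟨z, hz⟩, hsub⟩ := hcover x (hl x hx)
  have hconst : ∀ y ∈ l, a (i z hz) z = a (i z hz) y := fun y hy ↦
    hlabel _ _ _ (hsub ⟨hdist x hx y hy, hl y hy⟩)
  obtain ⟨y, hy, y', hy', hyy'⟩ := hchange (a (i z hz)) (by simp)
  exact hyy' ((hconst y hy).symm.trans (hconst y' hy'))

theorem borsuk_ulam (hcard : Fintype.card ι < Module.finrank ℝ E)
    (hf : ∀ i, ContinuousOn (f i) (Metric.sphere 0 1))
    (hodd : ∀ i, ∀ x ∈ Metric.sphere (0 : E) 1, f i (-x) = -f i x) :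
    ∃ x ∈ Metric.sphere (0 : E) 1, ∀ i, f i x = 0 := by
  obtain ⟨e, he⟩ := exists_linearIndependent_of_le_finrank (R := ℝ) (M := E) hcard
  have hne : ∀ x ∈ octahedron e, x ≠ 0 := fun x hx h ↦ zero_notMem_octahedron he (h ▸ hx)
  have hmaps : Set.MapsTo (fun x : E ↦ ‖x‖⁻¹ • x) (octahedron e) (Metric.sphere 0 1) :=
    fun x hx ↦ by simp [norm_smul, hne x hx]
  have hnormalize : ContinuousOn (fun x : E ↦ ‖x‖⁻¹ • x) (octahedron e) :=
    (continuousOn_id.norm.inv₀ fun x hx ↦ norm_ne_zero_iff.2 (hne x hx)).smul continuousOn_id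
  obtain ⟨x, hx, hzero⟩ := exists_mem_octahedron_forall_eq_zero
    (f := fun i x ↦ f i (‖x‖⁻¹ • x)) he (fun i ↦ (hf i).comp hnormalize hmaps)
    fun i x hx ↦ by rw [norm_neg, smul_neg, hodd i _ (hmaps hx)]
  exact ⟨‖x‖⁻¹ • x, hmaps hx, hzero⟩

end BorsukUlam

section OrthonormalPairs

variable {E : Type*} [NormedAddCommGroup E] [InnerProductSpace ℝ E]

lemma orthonormal_add_sub {u w : E} (h : Orthonormal ℝ ![u, w]) :
    Orthonormal ℝ ![(√2)⁻¹ • (u + w), (√2)⁻¹ • (u - w)] := by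
  simp only [orthonormal_vecCons_iff, Fin.forall_fin_one, Matrix.cons_val_fin_one,
    IsEmpty.forall_iff, Orthonormal.of_isEmpty, and_true] at h ⊢
  obtain ⟨hu, huw, hw⟩ := h
  have hwu : ⟪w, u⟫ = 0 := inner_eq_zero_symm.1 huw
  have hadd : ‖u + w‖ = √2 := by
    rw [norm_add_eq_sqrt_iff_real_inner_eq_zero.2 huw, hu, hw]
    norm_num
  have hsub : ‖u - w‖ = √2 := by
    rw [norm_sub_eq_sqrt_iff_real_inner_eq_zero.2 huw, hu, hw]
    norm_num
  have hscale {x : E} (hx : ‖x‖ = √2) : ‖(√2)⁻¹ • x‖ = 1 := by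
    rw [← hx, norm_smul, norm_inv, norm_norm]
    exact inv_mul_cancel₀ (by rw [hx]; positivity)
  refine ⟨hscale hadd, ?_, hscale hsub⟩
  simp [inner_smul_left, inner_smul_right, inner_add_left, inner_sub_right, huw, hwu, hu, hw]

lemma orthonormal_uncurry_finCons {k : ℕ} {α : Type*} {v : Fin k → α → E} {p : α → E}
    (hp : Orthonormal ℝ p) (hv : Orthonormal ℝ (Function.uncurry v))
    (hpv : ∀ a j b, ⟪p a, v j b⟫ = 0) :
    Orthonormal ℝ (Function.uncurry (Fin.cons p v : Fin (k + 1) → α → E)) := by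
  classical
  rw [orthonormal_iff_ite] at hp hv ⊢
  rintro ⟨i, a⟩ ⟨j, b⟩
  cases i using Fin.cases <;> cases j using Fin.cases
  case zero.zero => simpa using hp a b
  case zero.succ j => simpa [(Fin.succ_ne_zero j).symm] using hpv a j b
  case succ.zero i => simpa using inner_eq_zero_symm.1 (hpv b i a)
  case succ.succ i j => simpa using hv (i, a) (j, b)

variable {ι : Type*} [Fintype ι] {φ : ι → E → ℝ}

theorem exists_orthonormal_pair_forall_eq (hcard : Fintype.card ι + 2 ≤ Module.finrank ℝ E)
    (hφ : ∀ i, ContinuousOn (φ i) (Metric.sphere 0 1)) :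
    ∃ p : Fin 2 → E, Orthonormal ℝ p ∧ ∀ i, φ i (p 0) = φ i (p 1) := by
  have : FiniteDimensional ℝ E := .of_finrank_pos (by omega)
  have : Nontrivial E := Module.nontrivial_of_finrank_pos (R := ℝ) (by omega)
  obtain ⟨u, hu⟩ := exists_norm_eq E zero_le_one
  have hdim : 1 + Module.finrank ℝ (ℝ ∙ u)ᗮ = Module.finrank ℝ E := by
    rw [← finrank_span_singleton (K := ℝ) (norm_pos_iff.1 (hu ▸ one_pos)),
      Submodule.finrank_add_finrank_orthogonal]
  have hpair (w : (ℝ ∙ u)ᗮ) (hw : w ∈ Metric.sphere 0 1) :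
      Orthonormal ℝ ![(√2)⁻¹ • (u + w), (√2)⁻¹ • (u - w : E)] := by
    refine orthonormal_add_sub ?_
    have huw : ⟪u, (w : E)⟫ = 0 := Submodule.mem_orthogonal_singleton_iff_inner_right.1 w.2
    have hw : ‖(w : E)‖ = 1 := by simpa using hw
    simp [orthonormal_vecCons_iff, hu, hw, huw]
  obtain ⟨w, hw, heq⟩ := borsuk_ulam
    (f := fun i (w : (ℝ ∙ u)ᗮ) ↦ φ i ((√2)⁻¹ • (u + w)) - φ i ((√2)⁻¹ • (u - w)))
    (by omega)
    (fun i ↦ ((hφ i).comp (by fun_prop) fun w hw ↦ by simpa using (hpair w hw).1 0).sub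
      ((hφ i).comp (by fun_prop) fun w hw ↦ by simpa using (hpair w hw).1 1))
    fun i w _ ↦ by simp [← sub_eq_add_neg]
  exact ⟨_, hpair w hw, fun i ↦ sub_eq_zero.1 (heq i)⟩

theorem squares_inscribe_three_general {k : ℕ}
    (hcard : Fintype.card ι + 2 * k ≤ Module.finrank ℝ E)
    (hφ : ∀ i, ContinuousOn (φ i) (Metric.sphere 0 1)) :
    ∃ v : Fin k → Fin 2 → E, Orthonormal ℝ (Function.uncurry v) ∧
      ∀ i j, φ i (v j 0) = φ i (v j 1) := by
  induction k with
  | zero => exact ⟨Fin.elim0, .of_isEmpty _, fun i j ↦ j.elim0⟩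
  | succ k ih =>
    obtain ⟨v, hv, hφv⟩ := ih (by omega)
    let V := Submodule.span ℝ (Set.range (Function.uncurry v))
    have : FiniteDimensional ℝ E := .of_finrank_pos (by omega)
    have hV : Module.finrank ℝ V = 2 * k := by
      simpa [mul_comm] using finrank_span_eq_card hv.linearIndependent
    have hdim := V.finrank_add_finrank_orthogonal
    obtain ⟨p, hp, hφp⟩ := exists_orthonormal_pair_forall_eq (E := Vᗮ)
      (φ := fun i w ↦ φ i w) (by omega)
      fun i ↦ (hφ i).comp continuous_subtype_val.continuousOn fun w hw ↦ by simpa using hw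
    refine ⟨Fin.cons (fun a ↦ (p a : E)) v, orthonormal_uncurry_finCons
      (hp.comp_linearIsometry Vᗮ.subtypeₗᵢ) hv fun a j b ↦ ?_, fun i ↦ Fin.cases (hφp i) (hφv i)⟩
    exact V.inner_left_of_mem_orthogonal (Submodule.subset_span ⟨(j, b), rfl⟩) (p a).2

end OrthonormalPairs

lemma continuous_dirWidth {n : ℕ} {K : Set (EuclideanSpace ℝ (Fin n))} (hK : IsCompact K) :
    Continuous (dirWidth K) :=
  (hK.continuous_sSup (f := fun v x ↦ ⟪x, v⟫) (by fun_prop)).sub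
    (hK.continuous_sInf (f := fun v x ↦ ⟪x, v⟫) (by fun_prop))

lemma sub_flipStiefelR_div_three_add_six_le {n : ℕ} (hn : 6 ≤ n) :
    (n - flipStiefelR n - 1) / 3 + 6 ≤ n := by
  unfold flipStiefelR
  split_ifs <;> omega

/-- Given `⌊(n - r_n - 1)/3⌋` nonempty compact convex regions in `ℝⁿ` (`n ≥ 6`),
there exist pairwise orthogonal unit vectors `v₁, …, v₆` such that each region has
equal widths in directions `v₁, v₂`, in directions `v₃, v₄`, and in directions
`v₅, v₆`. -/
theorem squares_inscribe_three (n : ℕ) (hn : 6 ≤ n)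
    (K : Fin ((n - flipStiefelR n - 1) / 3) → Set (EuclideanSpace ℝ (Fin n)))
    (hne : ∀ i, (K i).Nonempty) (hcpt : ∀ i, IsCompact (K i))
    (hconv : ∀ i, Convex ℝ (K i)) :
    ∃ v : Fin 6 → EuclideanSpace ℝ (Fin n),
      (∀ i, ‖v i‖ = 1) ∧
      (∀ i j : Fin 6, i ≠ j → ⟪v i, v j⟫ = 0) ∧
      ∀ i, dirWidth (K i) (v 0) = dirWidth (K i) (v 1) ∧
           dirWidth (K i) (v 2) = dirWidth (K i) (v 3) ∧
           dirWidth (K i) (v 4) = dirWidth (K i) (v 5) := by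
  obtain ⟨v, hv, hwidth⟩ := squares_inscribe_three_general (k := 3)
    (by simpa using sub_flipStiefelR_div_three_add_six_le hn)
    fun i ↦ (continuous_dirWidth (hcpt i)).continuousOn
  have hv6 := hv.comp _ (finProdFinEquiv (m := 3) (n := 2)).symm.injective
  exact ⟨_, hv6.1, fun _ _ hij ↦ hv6.2 hij, fun i ↦ ⟨hwidth i 0, hwidth i 1, hwidth i 2⟩⟩
end

section
/- Let n = 2^r − 1 for some r > 0 and let 1 < 2k ≤ n. There is no continuous C_2-equivariant map f : S^{n-1} → V_{n,2k}, where C_2 acts on the sphere S^{n-1} by the antipodal action a · v = −v and on V_{n,2k} by the flip action. -/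
/-- The index flip on `Fin (2k)`: swaps `2i ↔ 2i + 1`. -/
def finFlip {k : ℕ} (i : Fin (2 * k)) : Fin (2 * k) :=
  ⟨if i.1 % 2 = 0 then i.1 + 1 else i.1 - 1, by
    rcases i with ⟨v, hv⟩
    dsimp only
    split <;> omega⟩

lemma finFlip_involutive {k : ℕ} : Function.Involutive (finFlip (k := k)) := by
  intro i
  rcases i with ⟨v, hv⟩
  apply Fin.ext
  simp only [finFlip]
  split_ifs <;> omega

lemma finFlip_injective {k : ℕ} : Function.Injective (finFlip (k := k)) :=
  finFlip_involutive.injective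

/-- The real Stiefel manifold `V_{n,m}` of orthonormal `m`-frames in `ℝⁿ`. -/
abbrev Stiefel (n m : ℕ) : Type :=
  { v : Fin m → EuclideanSpace ℝ (Fin n) // Orthonormal ℝ v }

/-- The flip involution on `V_{n,2k}`:
`(v₁, v₂, …, v_{2k}) ↦ (v₂, v₁, …, v_{2k}, v_{2k-1})`. -/
def flipFrame {n k : ℕ} (v : Stiefel n (2 * k)) : Stiefel n (2 * k) :=
  ⟨v.1 ∘ finFlip, v.2.comp finFlip finFlip_injective⟩

/-- The antipodal involution on `V_{n,m}`: `(v₁, …, v_m) ↦ (−v₁, …, −v_m)`. -/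
def negFrame {n m : ℕ} (v : Stiefel n m) : Stiefel n m :=
  ⟨fun i => -(v.1 i), by
    have h2 := v.2
    rw [orthonormal_iff_ite] at h2 ⊢
    intro i j
    simpa [inner_neg_neg] using h2 i j⟩

/-!
Given such an `f`, put `v x := f(x)₁`, so that `v (-x) = f(x)₂` is orthogonal to `v x` and
`v x + t • v (-x)` never vanishes for `t ∈ [-1, 1]`. As `t` goes from `-1` to `1` this is a
homotopy, through maps from the sphere to `ℝⁿ ∖ {0}`, from an odd map to an even one. Such a
homotopy does not exist, because odd maps have odd degree and even maps have even degree.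

The degree modulo 2 is read off from labels, in the manner of Tucker and Ky Fan. Label a point by
the largest coordinate of its image, with sign, and count modulo 2 the simplices of a fine
triangulation whose signed labels alternate when sorted. The count on the boundary of a chain, for
either leading sign, is the count on the chain for both leading signs together. Build the sphere
from its two hemispheres: for an odd labelling the count reduces to the equator and is `1` by
induction on the dimension, for an even one the hemispheres contribute equally and the count is `0`.
On the region between two concentric cross-polytopes there are too few labels for a full-dimensional
simplex to alternate, so the counts on its two boundary spheres agree.
-/

/-- The labels `±i` with `i : ι`, ordered lexicographically so that only the order of the indices
matters for labels without a complementary pair; `true` is the sign `+`. -/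
abbrev SignedIndex (ι : Type*) : Type _ := ι ×ₗ Bool

namespace SignedIndex

variable {ι : Type*}

/-- The index of a label, forgetting the sign. -/
def index (x : SignedIndex ι) : ι := (ofLex x).1

/-- The sign of a label. -/
def sign (x : SignedIndex ι) : Bool := (ofLex x).2

/-- The complementary label, with the opposite sign. -/
def flip (x : SignedIndex ι) : SignedIndex ι := toLex (index x, !sign x)

theorem sign_flip (x : SignedIndex ι) : sign (flip x) = !sign x := rfl

theorem ext {x y : SignedIndex ι} (hindex : index x = index y) (hsign : sign x = sign y) : x = y :=
  ofLex.injective (Prod.ext hindex hsign)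

theorem strictMonoOn_flip [LinearOrder ι] {s : Set (SignedIndex ι)} (hs : Set.InjOn index s) :
    StrictMonoOn flip s := by
  intro x hx y hy hxy
  rcases Prod.Lex.lt_iff.1 hxy with hlt | ⟨heq, -⟩
  · exact Prod.Lex.lt_iff.2 (.inl hlt)
  · exact absurd (hs hx hy heq) hxy.ne

section Dominant

variable [Fintype ι] [Nonempty ι]

/-- An index of a coordinate of largest absolute value. The choice depends only on the absolute
values of the coordinates, hence is the same for `y` and `-y`. -/
noncomputable def dominantIndex (y : ι → ℝ) : ι :=
  Classical.choose (Finite.exists_max fun i => |y i|)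

theorem abs_apply_dominantIndex (y : ι → ℝ) : |y (dominantIndex y)| = ‖y‖ :=
  (norm_le_pi_norm y _).antisymm <| (pi_norm_le_iff_of_nonneg (abs_nonneg _)).2
    (Classical.choose_spec (Finite.exists_max fun i => |y i|))

theorem dominantIndex_neg (y : ι → ℝ) : dominantIndex (-y) = dominantIndex y := by
  simp only [dominantIndex, Pi.neg_apply, abs_neg]

/-- The label of a nonzero vector: the index and sign of its dominant coordinate. -/
noncomputable def dominant (y : ι → ℝ) : SignedIndex ι :=
  toLex (dominantIndex y, decide (0 < y (dominantIndex y)))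

theorem dominant_neg {y : ι → ℝ} (hy : y ≠ 0) : dominant (-y) = flip (dominant y) := by
  have hne : y (dominantIndex y) ≠ 0 := by
    rw [← abs_pos, abs_apply_dominantIndex]
    exact norm_pos_iff.2 hy
  refine ext (dominantIndex_neg y) ?_
  rcases hne.lt_or_gt with h | h <;>
    simp [sign, flip, dominant, dominantIndex_neg, h, h.le]

theorem dominant_eq_of_dist_lt {y y' : ι → ℝ} (hdist : dist y y' < ‖y‖)
    (hindex : index (dominant y) = index (dominant y')) : dominant y = dominant y' := by
  have hclose : |y (dominantIndex y) - y' (dominantIndex y)| < |y (dominantIndex y)| := by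
    rw [abs_apply_dominantIndex]
    exact (dist_le_pi_dist y y' _).trans_lt hdist
  have hpos : 0 < y (dominantIndex y) ↔ 0 < y' (dominantIndex y) := by
    constructor <;> intro h
    · rw [abs_of_pos h, abs_lt] at hclose
      linarith
    · by_contra hneg
      rw [abs_of_nonpos (not_lt.1 hneg), abs_lt] at hclose
      linarith
  refine ext hindex ?_
  have hindex' : dominantIndex y = dominantIndex y' := hindex
  simp only [sign, dominant, ofLex_toLex, ← hindex', hpos]

end Dominant

end SignedIndex

open MvPolynomial

/-- Simplicial chains modulo 2 with vertices in `E`: the monomial `p₀ ⋯ p_k` is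
the simplex with these vertices, and multiplication is the join.
Repeated vertices are kept as degenerate simplices rather than set to zero, so that renaming
vertices is a ring homomorphism. -/
abbrev ModTwoChain (E : Type*) : Type _ := MvPolynomial E (ZMod 2)

namespace ModTwoChain

noncomputable section

variable {E F M : Type*} [AddCommGroup M] [Module (ZMod 2) M]

/-- The chains all of whose simplices lie in `S`. -/
abbrev chainsOn (S : Set (E →₀ ℕ)) : Submodule (ZMod 2) (ModTwoChain E) :=
  restrictSupport (ZMod 2) S

theorem linearMap_ext_monomial {f g : ModTwoChain E →ₗ[ZMod 2] M}
    (h : ∀ m, f (monomial m 1) = g (monomial m 1)) : f = g :=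
  (basisMonomials E (ZMod 2)).ext fun m => by simpa only [coe_basisMonomials] using h m

theorem linearMap_eqOn_chainsOn {f g : ModTwoChain E →ₗ[ZMod 2] M} {S : Set (E →₀ ℕ)}
    (h : ∀ m ∈ S, f (monomial m 1) = g (monomial m 1)) {c : ModTwoChain E}
    (hc : c ∈ chainsOn S) : f c = g c := by
  rw [chainsOn, restrictSupport_eq_span] at hc
  exact LinearMap.eqOn_span (Set.forall_mem_image.2 h) hc

theorem map_mem_of_mem_chainsOn {f : ModTwoChain E →ₗ[ZMod 2] M} {S : Set (E →₀ ℕ)}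
    {Q : Submodule (ZMod 2) M} (h : ∀ m ∈ S, f (monomial m 1) ∈ Q) {c : ModTwoChain E}
    (hc : c ∈ chainsOn S) : f c ∈ Q := by
  rw [chainsOn, restrictSupport_eq_span] at hc
  have hle : Submodule.span (ZMod 2) ((monomial · 1) '' S) ≤ Q.comap f :=
    Submodule.span_le.2 (Set.image_subset_iff.2 h)
  exact hle hc

theorem monomial_one_mem_chainsOn {S : Set (E →₀ ℕ)} {m : E →₀ ℕ} (hm : m ∈ S) :
    (monomial m 1 : ModTwoChain E) ∈ chainsOn S :=
  (monomial_mem_restrictSupport _).2 (.inl hm)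

theorem X_mul_monomial (p : E) (m : E →₀ ℕ) :
    (X p * monomial m 1 : ModTwoChain E) = monomial (Finsupp.single p 1 + m) 1 := by
  rw [monomial_single_add, pow_one]

/-- The (augmented) simplicial boundary: the derivation sending every vertex to `1`, so that a
simplex is sent to the sum of its faces. -/
def boundary : Derivation (ZMod 2) (ModTwoChain E) (ModTwoChain E) :=
  mkDerivation (ZMod 2) fun _ => 1

@[simp]
theorem boundary_X (p : E) : boundary (X p : ModTwoChain E) = 1 := mkDerivation_X _ _ _

theorem boundary_X_mul (p : E) (c : ModTwoChain E) :
    boundary (X p * c) = c + X p * boundary c := by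
  rw [Derivation.leibniz, boundary_X, smul_eq_mul, smul_eq_mul, mul_one, add_comm]

theorem boundary_boundary (c : ModTwoChain E) : boundary (boundary c) = 0 := by
  induction c using MvPolynomial.induction_on with
  | C a => simp
  | add c d hc hd => rw [map_add, map_add, hc, hd, add_zero]
  | mul_X c p hc =>
    rw [mul_comm, boundary_X_mul, map_add, boundary_X_mul, hc, mul_zero, add_zero,
      CharTwo.add_self_eq_zero]

theorem boundary_rename (φ : E → F) (c : ModTwoChain E) :
    boundary (rename φ c) = rename φ (boundary c) := by
  induction c using MvPolynomial.induction_on with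
  | C a => simp
  | add c d hc hd => simp only [map_add, hc, hd]
  | mul_X c p hc =>
    rw [mul_comm, boundary_X_mul, map_mul, rename_X, boundary_X_mul, hc, map_add, map_mul,
      rename_X]

theorem boundary_monomial_mem_chainsOn (m : E →₀ ℕ) :
    boundary (monomial m 1 : ModTwoChain E) ∈ chainsOn {m' | ∃ p, Finsupp.single p 1 + m' = m} := by
  rw [boundary, mkDerivation_monomial, Finsupp.sum]
  refine Submodule.smul_mem _ _ (Submodule.sum_mem _ fun p hp => ?_)
  rw [smul_eq_mul, mul_one, monomial_mem_restrictSupport]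
  refine .inl ⟨p, add_tsub_cancel_of_le ?_⟩
  rw [Finsupp.single_le_iff]
  exact Nat.one_le_iff_ne_zero.2 (Finsupp.mem_support_iff.1 hp)

/-- The linear map on chains with prescribed values on simplices. -/
def linearExtension (f : (E →₀ ℕ) → M) : ModTwoChain E →ₗ[ZMod 2] M :=
  (basisMonomials E (ZMod 2)).constr (ZMod 2) f

@[simp]
theorem linearExtension_monomial (f : (E →₀ ℕ) → M) (m : E →₀ ℕ) :
    linearExtension f (monomial m 1) = f m := by
  simpa only [linearExtension, coe_basisMonomials] using
    (basisMonomials E (ZMod 2)).constr_basis (ZMod 2) f m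

section Subdivision

section Barycenter

variable [AddCommGroup E] [Module ℝ E] [AddCommGroup F] [Module ℝ F]

/-- The barycenter of the vertices of a simplex, counted with multiplicity; it is `0` for the empty
simplex. -/
def barycenter (m : E →₀ ℕ) : E := (m.degree : ℝ)⁻¹ • m.sum fun p k => (k : ℝ) • p

theorem barycenter_mapDomain (φ : E →ₗ[ℝ] F) (m : E →₀ ℕ) :
    barycenter (m.mapDomain φ) = φ (barycenter m) := by
  have hsum : (m.mapDomain φ).sum (fun p k => (k : ℝ) • p) = m.sum fun p k => (k : ℝ) • φ p :=
    Finsupp.sum_mapDomain_index (by simp) (by simp [add_smul])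
  rw [barycenter, barycenter, hsum, Finsupp.degree_mapDomain, map_smul, map_finsuppSum]
  simp only [map_smul]

theorem barycenter_mem_convexHull {m : E →₀ ℕ} (hm : m ≠ 0) :
    barycenter m ∈ convexHull ℝ (m.support : Set E) := by
  have hpos : 0 < m.degree := Nat.pos_of_ne_zero (mt (Finsupp.degree_eq_zero_iff m).1 hm)
  have hcenter : barycenter m = m.support.centerMass (fun p => (m p : ℝ)) id := by
    simp [barycenter, Finset.centerMass, Finsupp.degree_apply, Finsupp.sum]
  rw [hcenter]
  refine Finset.centerMass_mem_convexHull _ (fun _ _ => Nat.cast_nonneg _) ?_ fun p hp => hp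
  exact_mod_cast hpos

/-- Barycentric subdivision of chains whose simplices have `k` vertices: the cone from the
barycenter over the subdivided boundary. The number of vertices is a parameter because the recursion
runs on it; on simplices of another size the value is meaningless. -/
def subdivide : ℕ → ModTwoChain E →ₗ[ZMod 2] ModTwoChain E
  | 0 => LinearMap.id
  | k + 1 => linearExtension fun m => X (barycenter m) * subdivide k (boundary (monomial m 1))

theorem subdivide_zero (c : ModTwoChain E) : subdivide 0 c = c := by
  rw [subdivide, LinearMap.id_apply]

theorem subdivide_succ_monomial (k : ℕ) (m : E →₀ ℕ) :
    subdivide (k + 1) (monomial m 1) =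
      X (barycenter m) * subdivide k (boundary (monomial m 1)) := by
  rw [subdivide, linearExtension_monomial]

theorem boundary_subdivide (k : ℕ) (c : ModTwoChain E) :
    boundary (subdivide (k + 1) c) = subdivide k (boundary c) := by
  suffices h : (boundary : Derivation _ _ _).toLinearMap ∘ₗ subdivide (k + 1) =
      subdivide k ∘ₗ (boundary : Derivation _ (ModTwoChain E) _).toLinearMap from
    LinearMap.congr_fun h c
  induction k with
  | zero =>
    refine linearMap_ext_monomial fun m => ?_
    simp [subdivide_succ_monomial, subdivide_zero, boundary_boundary]
  | succ k ih =>
    refine linearMap_ext_monomial fun m => ?_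
    have hcycle := LinearMap.congr_fun ih (boundary (monomial m 1))
    simp only [LinearMap.comp_apply, Derivation.coeFn_coe, boundary_boundary, map_zero] at hcycle
    simp [subdivide_succ_monomial, hcycle]

theorem rename_subdivide (φ : E →ₗ[ℝ] F) (k : ℕ) (c : ModTwoChain E) :
    rename φ (subdivide k c) = subdivide k (rename φ c) := by
  induction k generalizing c with
  | zero => rw [subdivide_zero, subdivide_zero]
  | succ k ih =>
    suffices h : (rename φ).toLinearMap ∘ₗ subdivide (k + 1) =
        subdivide (k + 1) ∘ₗ (rename φ : _ →ₐ[ZMod 2] _).toLinearMap from LinearMap.congr_fun h c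
    refine linearMap_ext_monomial fun m => ?_
    simp [subdivide_succ_monomial, rename_monomial, ih, ← boundary_rename, barycenter_mapDomain]

end Barycenter

variable [NormedAddCommGroup E] [NormedSpace ℝ E]

theorem dist_barycenter_le {N : ℕ} {D : ℝ} {m : E →₀ ℕ} (hdeg : m.degree ≤ N) (hD : 0 ≤ D)
    (hm : ∀ p ∈ m.support, ∀ q ∈ m.support, dist p q ≤ D) {q : E} (hq : q ∈ m.support) :
    dist q (barycenter m) ≤ (1 - (N : ℝ)⁻¹) * D := by
  classical
  have hmq : 1 ≤ m q := Nat.one_le_iff_ne_zero.2 (Finsupp.mem_support_iff.1 hq)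
  have hpos : (0 : ℝ) < m.degree := by exact_mod_cast hmq.trans (Finsupp.le_degree q m)
  have hcast : (m.degree : ℝ) = ∑ p ∈ m.support, (m p : ℝ) := by
    rw [Finsupp.degree_apply, Nat.cast_sum]
  have hsub : q - barycenter m =
      (m.degree : ℝ)⁻¹ • ∑ p ∈ m.support, (m p : ℝ) • (q - p) := by
    simp only [smul_sub, Finset.sum_sub_distrib]
    rw [← Finset.sum_smul, ← hcast, inv_smul_smul₀ hpos.ne', barycenter, Finsupp.sum]
  have hterm : ∀ p ∈ m.support, ‖(m p : ℝ) • (q - p)‖ ≤ if p = q then 0 else m p * D := by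
    intro p hp
    split_ifs with hpq
    · simp [hpq]
    · rw [norm_smul, Real.norm_natCast, ← dist_eq_norm]
      gcongr
      exact hm q hq p hp
  have hsum : ∑ p ∈ m.support, (if p = q then 0 else m p * D) = (m.degree - m q) * D := by
    rw [hcast, ← Finset.add_sum_erase _ _ hq, ← Finset.add_sum_erase _ _ hq, if_pos rfl, zero_add,
      add_sub_cancel_left, Finset.sum_mul]
    exact Finset.sum_congr rfl fun p hp => if_neg (Finset.ne_of_mem_erase hp)
  calc dist q (barycenter m)
      = (m.degree : ℝ)⁻¹ * ‖∑ p ∈ m.support, (m p : ℝ) • (q - p)‖ := by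
        rw [dist_eq_norm, hsub, norm_smul, norm_inv, Real.norm_natCast]
    _ ≤ (m.degree : ℝ)⁻¹ * ((m.degree - m q) * D) := by
        gcongr
        exact hsum ▸ norm_sum_le_of_le _ hterm
    _ ≤ (m.degree : ℝ)⁻¹ * ((m.degree - 1) * D) := by
        gcongr
        exact_mod_cast hmq
    _ = (1 - (m.degree : ℝ)⁻¹) * D := by field_simp
    _ ≤ (1 - (N : ℝ)⁻¹) * D := by gcongr

/-- The simplices with `k` vertices, convex hull inside `K`, and diameter at most `D`. -/
def fineSimplices (K : Set E) (k : ℕ) (D : ℝ) : Set (E →₀ ℕ) :=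
  {m | m.degree = k ∧ convexHull ℝ (m.support : Set E) ⊆ K ∧
    ∀ p ∈ m.support, ∀ q ∈ m.support, dist p q ≤ D}

theorem fineSimplices_mono {K L : Set E} (h : K ⊆ L) (k : ℕ) (D : ℝ) :
    fineSimplices K k D ⊆ fineSimplices L k D :=
  fun _ hm => ⟨hm.1, hm.2.1.trans h, hm.2.2⟩

theorem X_mul_mem_chainsOn_fineSimplices {K : Set E} (hK : Convex ℝ K) {q : E} (hq : q ∈ K)
    {k : ℕ} {R : ℝ} (hR : 0 ≤ R) {c : ModTwoChain E}
    (hc : c ∈ chainsOn (fineSimplices (K ∩ Metric.closedBall q R) k R)) :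
    X q * c ∈ chainsOn (fineSimplices K (k + 1) R) := by
  classical
  refine map_mem_of_mem_chainsOn (f := LinearMap.mulLeft (ZMod 2) (X q)) ?_ hc
  rintro m ⟨hdeg, hhull, hdist⟩
  have hball : ∀ p ∈ m.support, p ∈ K ∧ dist p q ≤ R :=
    fun p hp => hhull (subset_convexHull ℝ _ hp)
  have hmem : ∀ p ∈ (Finsupp.single q 1 + m).support, p = q ∨ p ∈ m.support := by
    intro p hp
    simpa [Finsupp.support_single] using Finsupp.support_add hp
  rw [LinearMap.mulLeft_apply, X_mul_monomial]
  refine monomial_one_mem_chainsOn ⟨by rw [map_add, Finsupp.degree_single, hdeg, add_comm], ?_, ?_⟩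
  · refine convexHull_min (fun p hp => ?_) hK
    rcases hmem p hp with rfl | hp
    exacts [hq, (hball p hp).1]
  · intro p hp p' hp'
    rcases hmem p hp with rfl | hpm <;> rcases hmem p' hp' with rfl | hpm'
    · rwa [dist_self]
    · exact dist_comm p' p ▸ (hball p' hpm').2
    · exact (hball p hpm).2
    · exact hdist p hpm p' hpm'

theorem subdivide_monomial_mem_chainsOn {N : ℕ} {D : ℝ} (hD : 0 ≤ D) {k : ℕ} (hk : k ≤ N)
    {K : Set E} {m : E →₀ ℕ} (hm : m ∈ fineSimplices K k D) :
    subdivide k (monomial m 1) ∈ chainsOn (fineSimplices K k ((1 - (N : ℝ)⁻¹) * D)) := by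
  induction k generalizing K m with
  | zero =>
    rw [subdivide_zero]
    obtain rfl := (Finsupp.degree_eq_zero_iff m).1 hm.1
    exact monomial_one_mem_chainsOn ⟨rfl, hm.2.1, by simp⟩
  | succ k ih =>
    obtain ⟨hdeg, hhull, hdist⟩ := hm
    have hne : m ≠ 0 := fun h => by simp [h] at hdeg
    have hR : 0 ≤ (1 - (N : ℝ)⁻¹) * D :=
      mul_nonneg (sub_nonneg.2 (Nat.cast_inv_le_one N)) hD
    rw [subdivide_succ_monomial]
    refine restrictSupport_mono _ (fineSimplices_mono hhull _ _) (X_mul_mem_chainsOn_fineSimplices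
      (convex_convexHull ℝ _) (barycenter_mem_convexHull hne) hR
      (map_mem_of_mem_chainsOn ?_ (boundary_monomial_mem_chainsOn m)))
    rintro m' ⟨p, rfl⟩
    have hsupp : m'.support ⊆ (Finsupp.single p 1 + m').support :=
      Finsupp.support_mono le_add_self
    refine ih (Nat.le_of_succ_le hk) ⟨?_, ?_, fun q hq q' hq' =>
      hdist q (hsupp hq) q' (hsupp hq')⟩
    · rw [map_add, Finsupp.degree_single] at hdeg
      omega
    · exact Set.subset_inter (convexHull_mono hsupp) (convexHull_min
        (fun q hq => dist_barycenter_le (hdeg.trans_le hk) hD hdist (hsupp hq))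
        (convex_closedBall _ _))

theorem iterate_subdivide_mem_chainsOn {N : ℕ} {D : ℝ} (hD : 0 ≤ D) {k : ℕ} (hk : k ≤ N)
    {K : Set E} (j : ℕ) {c : ModTwoChain E} (hc : c ∈ chainsOn (fineSimplices K k D)) :
    (subdivide k)^[j] c ∈ chainsOn (fineSimplices K k ((1 - (N : ℝ)⁻¹) ^ j * D)) := by
  have hN : 0 ≤ 1 - (N : ℝ)⁻¹ := sub_nonneg.2 (Nat.cast_inv_le_one N)
  induction j with
  | zero => simpa using hc
  | succ j ih =>
    rw [Function.iterate_succ_apply', pow_succ', mul_assoc]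
    exact map_mem_of_mem_chainsOn
      (fun m hm => subdivide_monomial_mem_chainsOn (by positivity) hk hm) ih

end Subdivision

section Alternation

variable {L : Type*}

/-- `1` if the signs of the entries of a list alternate starting with `b`, and `0` otherwise. -/
def alternatingIndicator (sgn : L → Bool) : Bool → List L → ZMod 2
  | _, [] => 1
  | b, x :: l => if sgn x = b then alternatingIndicator sgn (!b) l else 0

theorem alternatingIndicator_map {L' : Type*} {sgn : L → Bool} {sgn' : L' → Bool} {φ : L → L'}
    (h : ∀ x, sgn' (φ x) = !sgn x) (b : Bool) (l : List L) :
    alternatingIndicator sgn' b (l.map φ) = alternatingIndicator sgn (!b) l := by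
  induction l generalizing b with
  | nil => rfl
  | cons x l ih =>
    simp only [List.map_cons, alternatingIndicator, h, ih, Bool.not_eq_eq_eq_not]

theorem alternatingIndicator_eq_zero_of_not_nodup [PartialOrder L] {sgn : L → Bool} {l : List L}
    (hl : l.Pairwise (· ≤ ·)) (hdup : ¬l.Nodup) (b : Bool) :
    alternatingIndicator sgn b l = 0 := by
  induction l generalizing b with
  | nil => exact absurd List.nodup_nil hdup
  | cons x l ih =>
    obtain ⟨hx, hl⟩ := List.pairwise_cons.1 hl
    by_cases hxl : x ∈ l
    · obtain ⟨y, l, rfl⟩ := List.exists_cons_of_ne_nil (List.ne_nil_of_mem hxl)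
      have hyx : y ≤ x := by
        rcases List.mem_cons.1 hxl with rfl | hxl
        exacts [le_rfl, (List.pairwise_cons.1 hl).1 x hxl]
      obtain rfl := (hx y List.mem_cons_self).antisymm hyx
      cases b <;> simp +contextual [alternatingIndicator]
    · rw [alternatingIndicator, ih hl fun h => hdup (h.cons hxl), ite_self]

variable [LinearOrder L] {sgn : L → Bool}

/-- The number modulo 2 of simplices in a chain of labels whose vertices, in increasing order, have
alternating signs starting with `b`. -/
def alternatingCount (sgn : L → Bool) (b : Bool) : ModTwoChain L →ₗ[ZMod 2] ZMod 2 :=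
  linearExtension fun m => alternatingIndicator sgn b m.toMultiset.sort

theorem alternatingCount_monomial (b : Bool) (m : L →₀ ℕ) :
    alternatingCount sgn b (monomial m 1) = alternatingIndicator sgn b m.toMultiset.sort :=
  linearExtension_monomial _ _

@[simp]
theorem alternatingCount_one (b : Bool) : alternatingCount sgn b 1 = 1 := by
  rw [← C_1, ← monomial_zero', alternatingCount_monomial, map_zero, Multiset.sort_zero,
    alternatingIndicator]

theorem alternatingCount_X_mul {x : L} {c : ModTwoChain L}
    (hc : c ∈ chainsOn {m | ∀ y ∈ m.support, x ≤ y}) (b : Bool) :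
    alternatingCount sgn b (X x * c) = if sgn x = b then alternatingCount sgn (!b) c else 0 := by
  have hcons : ∀ m : L →₀ ℕ, (∀ y ∈ m.support, x ≤ y) →
      alternatingCount sgn b (X x * monomial m 1) =
        if sgn x = b then alternatingCount sgn (!b) (monomial m 1) else 0 := by
    intro m hm
    have hsort : (Finsupp.single x 1 + m).toMultiset.sort = x :: m.toMultiset.sort := by
      rw [map_add, Finsupp.toMultiset_single, one_smul, Multiset.singleton_add]
      exact Multiset.sort_cons _ _ _ fun y hy => hm y ((Finsupp.mem_toMultiset m y).1 hy)
    rw [X_mul_monomial, alternatingCount_monomial, hsort, alternatingIndicator,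
      alternatingCount_monomial]
  split_ifs at hcons ⊢ with hx
  · exact linearMap_eqOn_chainsOn
      (f := alternatingCount sgn b ∘ₗ LinearMap.mulLeft (ZMod 2) (X x)) hcons hc
  · exact linearMap_eqOn_chainsOn
      (f := alternatingCount sgn b ∘ₗ LinearMap.mulLeft (ZMod 2) (X x)) (g := 0) hcons hc

theorem exists_eq_single_min_add {m : L →₀ ℕ} (hm : m ≠ 0) :
    ∃ x m', m = Finsupp.single x 1 + m' ∧ ∀ y ∈ m'.support, x ≤ y := by
  have hne : m.support.Nonempty := Finsupp.support_nonempty_iff.2 hm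
  have hle : Finsupp.single (m.support.min' hne) 1 ≤ m :=
    Finsupp.single_le_iff.2 (Nat.one_le_iff_ne_zero.2
      (Finsupp.mem_support_iff.1 (m.support.min'_mem hne)))
  exact ⟨_, _, (add_tsub_cancel_of_le hle).symm, fun y hy =>
    m.support.min'_le y (Finsupp.support_mono tsub_le_self hy)⟩

theorem alternatingCount_boundary_monomial (b : Bool) (m : L →₀ ℕ) :
    alternatingCount sgn b (boundary (monomial m 1)) =
      alternatingCount sgn b (monomial m 1) + alternatingCount sgn (!b) (monomial m 1) := by
  induction hk : m.degree generalizing m b with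
  | zero =>
    obtain rfl := (Finsupp.degree_eq_zero_iff m).1 hk
    rw [monomial_zero', C_1, Derivation.map_one_eq_zero, map_zero, alternatingCount_one,
      alternatingCount_one, CharTwo.add_self_eq_zero]
  | succ k ih =>
    obtain ⟨x, m, rfl, hx⟩ := exists_eq_single_min_add (m := m) fun h => by simp [h] at hk
    have hdeg : m.degree = k := by
      rw [map_add, Finsupp.degree_single] at hk
      omega
    have hface : boundary (monomial m 1) ∈ chainsOn {m' : L →₀ ℕ | ∀ y ∈ m'.support, x ≤ y} := by
      refine restrictSupport_mono _ ?_ (boundary_monomial_mem_chainsOn m)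
      rintro m' ⟨p, rfl⟩ y hy
      exact hx y (Finsupp.support_mono le_add_self hy)
    rw [← X_mul_monomial, boundary_X_mul, map_add, alternatingCount_X_mul hface,
      alternatingCount_X_mul (monomial_one_mem_chainsOn hx),
      alternatingCount_X_mul (monomial_one_mem_chainsOn hx), ih _ _ hdeg, Bool.not_not]
    rcases Bool.eq_or_eq_not (sgn x) b with hb | hb
    · simp [hb, add_comm (alternatingCount sgn (!b) _), CharTwo.add_cancel_left]
    · simp [hb]

theorem alternatingCount_boundary (b : Bool) (c : ModTwoChain L) :
    alternatingCount sgn b (boundary c) =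
      alternatingCount sgn b c + alternatingCount sgn (!b) c := by
  have h : alternatingCount sgn b ∘ₗ boundary.toLinearMap =
      alternatingCount sgn b + alternatingCount sgn (!b) :=
    linearMap_ext_monomial fun m => by
      simpa using alternatingCount_boundary_monomial b m
  exact LinearMap.congr_fun h c

theorem alternatingCount_rename {L' : Type*} [LinearOrder L'] {sgn' : L' → Bool} {φ : L → L'}
    (hsgn : ∀ x, sgn' (φ x) = !sgn x) {c : ModTwoChain L}
    (hc : c ∈ chainsOn {m | StrictMonoOn φ m.support}) (b : Bool) :
    alternatingCount sgn' b (rename φ c) = alternatingCount sgn (!b) c := by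
  refine linearMap_eqOn_chainsOn
    (f := alternatingCount sgn' b ∘ₗ (rename φ).toLinearMap) (fun m hm => ?_) hc
  have hsort : m.toMultiset.sort.map φ = (m.toMultiset.map φ).sort :=
    Multiset.map_sort _ _ _ _ fun x hx y hy => (hm.le_iff_le
      ((Finsupp.mem_toMultiset m x).1 hx) ((Finsupp.mem_toMultiset m y).1 hy)).symm
  rw [LinearMap.comp_apply, AlgHom.toLinearMap_apply, rename_monomial, alternatingCount_monomial,
    alternatingCount_monomial, ← Finsupp.toMultiset_map, ← hsort, alternatingIndicator_map hsgn]

theorem alternatingCount_eq_zero_of_card_lt {ι : Type*} [Fintype ι] (π : L → ι) {k : ℕ}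
    (hk : Fintype.card ι < k) {c : ModTwoChain L}
    (hc : c ∈ chainsOn {m | m.degree = k ∧ Set.InjOn π m.support}) (b : Bool) :
    alternatingCount sgn b c = 0 := by
  refine linearMap_eqOn_chainsOn (g := 0) (fun m hm => ?_) hc
  obtain ⟨hdeg, hinj⟩ := hm
  rw [alternatingCount_monomial, LinearMap.zero_apply]
  refine alternatingIndicator_eq_zero_of_not_nodup (Multiset.pairwise_sort _ _) (fun hnodup => ?_) b
  have hsize : m.support.card = m.degree := by
    rw [← Finsupp.toFinset_toMultiset, Multiset.toFinset_card_of_nodup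
      (Multiset.sort_eq m.toMultiset (· ≤ ·) ▸ hnodup), Finsupp.card_toMultiset]
    rfl
  have hcard : m.support.card ≤ Fintype.card ι :=
    Finset.card_le_card_of_injOn π (fun _ _ => Finset.mem_univ _) hinj
  omega

end Alternation

section CrossPolytope

open scoped Pointwise

variable {ι : Type*} [DecidableEq ι]

/-- The points whose `ℓ¹` norm lies in `T`: a cross-polytope sphere if `T` is a point, the region
between two of them if `T` is an interval. -/
def l1Shell (ι : Type*) [Fintype ι] (T : Set ℝ) : Set (ι → ℝ) := {x | ∑ i, |x i| ∈ T}

/-- The simplices with `k` vertices on the coordinate axes in `t`, at distances from the origin in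
`T`, and with all vertices in one closed orthant, whose signs are given by `s`. -/
def axisSimplices (t : Finset ι) (T : Set ℝ) (k : ℕ) : Set ((ι → ℝ) →₀ ℕ) :=
  {m | m.degree = k ∧ ∃ s : ι → ℝ, (∀ i, |s i| = 1) ∧
    ∀ p ∈ m.support, ∃ i ∈ t, ∃ ρ ∈ T, p = Pi.single i (s i * ρ)}

theorem axisSimplices_mono {T T' : Set ℝ} (h : T ⊆ T') (t : Finset ι) (k : ℕ) :
    axisSimplices t T k ⊆ axisSimplices t T' k := by
  rintro m ⟨hdeg, s, hs, hm⟩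
  refine ⟨hdeg, s, hs, fun p hp => ?_⟩
  obtain ⟨i, hi, ρ, hρ, rfl⟩ := hm p hp
  exact ⟨i, hi, ρ, h hρ, rfl⟩

theorem axisSimplices_add_subset {t u : Finset ι} (htu : Disjoint t u) (T : Set ℝ) (k l : ℕ) :
    axisSimplices t T k + axisSimplices u T l ⊆ axisSimplices (t ∪ u) T (k + l) := by
  classical
  rintro _ ⟨m, ⟨hdeg, s, hs, hm⟩, m', ⟨hdeg', s', hs', hm'⟩, rfl⟩
  refine ⟨by rw [map_add, hdeg, hdeg'], t.piecewise s s', fun i => ?_, fun p hp => ?_⟩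
  · by_cases hi : i ∈ t <;> simp [hi, hs, hs']
  · rcases Finset.mem_union.1 (Finsupp.support_add hp) with hp | hp
    · obtain ⟨i, hi, ρ, hρ, rfl⟩ := hm p hp
      exact ⟨i, Finset.mem_union_left _ hi, ρ, hρ, by rw [Finset.piecewise_eq_of_mem _ _ _ hi]⟩
    · obtain ⟨i, hi, ρ, hρ, rfl⟩ := hm' p hp
      exact ⟨i, Finset.mem_union_right _ hi, ρ, hρ,
        by rw [Finset.piecewise_eq_of_notMem _ _ _ (Finset.disjoint_right.1 htu hi)]⟩

theorem mul_mem_chainsOn_axisSimplices {t u : Finset ι} (htu : Disjoint t u) {T : Set ℝ}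
    {k l : ℕ} {c d : ModTwoChain (ι → ℝ)}
    (hc : c ∈ chainsOn (axisSimplices t T k))
    (hd : d ∈ chainsOn (axisSimplices u T l)) :
    c * d ∈ chainsOn (axisSimplices (t ∪ u) T (k + l)) := by
  refine restrictSupport_mono _ (axisSimplices_add_subset htu T k l) ?_
  rw [restrictSupport_add]
  exact Submodule.mul_mem_mul hc hd

theorem X_single_mem_chainsOn_axisSimplices (i : ι) {σ ρ : ℝ} {T : Set ℝ}
    (hσ : |σ| = 1) (hρ : ρ ∈ T) :
    (X (Pi.single i (σ * ρ)) : ModTwoChain (ι → ℝ)) ∈ chainsOn (axisSimplices {i} T 1) := by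
  refine monomial_one_mem_chainsOn
    ⟨Finsupp.degree_single _ _, fun _ => σ, fun _ => hσ, fun p hp => ?_⟩
  obtain rfl := Finset.mem_singleton.1 (Finsupp.support_single_subset hp)
  exact ⟨i, Finset.mem_singleton_self i, ρ, hρ, rfl⟩

theorem X_single_mul_X_single_mem_chainsOn_axisSimplices (i : ι) {σ ρ ρ' : ℝ} {T : Set ℝ}
    (hσ : |σ| = 1) (hρ : ρ ∈ T) (hρ' : ρ' ∈ T) :
    (X (Pi.single i (σ * ρ)) * X (Pi.single i (σ * ρ')) : ModTwoChain (ι → ℝ)) ∈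
      chainsOn (axisSimplices {i} T 2) := by
  classical
  rw [X, X, monomial_mul, one_mul]
  refine monomial_one_mem_chainsOn ⟨by simp, fun _ => σ, fun _ => hσ, fun p hp => ?_⟩
  rcases Finset.mem_union.1 (Finsupp.support_add hp) with hp | hp <;>
    obtain rfl := Finset.mem_singleton.1 (Finsupp.support_single_subset hp)
  exacts [⟨i, Finset.mem_singleton_self i, ρ, hρ, rfl⟩,
    ⟨i, Finset.mem_singleton_self i, ρ', hρ', rfl⟩]

/-- The sphere of dimension zero on the `i`-th axis. -/
def axisPair (i : ι) (r : ℝ) : ModTwoChain (ι → ℝ) := X (Pi.single i r) + X (Pi.single i (-r))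

theorem axisPair_mem_chainsOn (i : ι) {r : ℝ} {T : Set ℝ} (hr : r ∈ T) :
    axisPair i r ∈ chainsOn (axisSimplices {i} T 1) := by
  refine Submodule.add_mem _ ?_ ?_
  · simpa using X_single_mem_chainsOn_axisSimplices i abs_one hr
  · simpa using X_single_mem_chainsOn_axisSimplices i (σ := -1) (by simp) hr

@[simp]
theorem boundary_axisPair (i : ι) (r : ℝ) : boundary (axisPair i r) = 0 := by
  rw [axisPair, map_add, boundary_X, boundary_X, CharTwo.add_self_eq_zero]

/-- The boundary sphere of the cross-polytope of radius `r` in the coordinates `t`, as the join of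
its pairs of antipodal vertices. -/
def crossPolytope (r : ℝ) (t : Finset ι) : ModTwoChain (ι → ℝ) := ∏ i ∈ t, axisPair i r

theorem crossPolytope_insert (r : ℝ) {t : Finset ι} {i : ι} (hi : i ∉ t) :
    crossPolytope r (insert i t) = axisPair i r * crossPolytope r t :=
  Finset.prod_insert hi

theorem crossPolytope_mem_chainsOn (r : ℝ) (t : Finset ι) :
    crossPolytope r t ∈ chainsOn (axisSimplices t {r} t.card) := by
  induction t using Finset.induction_on with
  | empty =>
    exact monomial_one_mem_chainsOn ⟨rfl, 1, by simp, by simp⟩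
  | insert i t hi ih =>
    rw [crossPolytope_insert r hi, Finset.card_insert_of_notMem hi, Finset.insert_eq, add_comm]
    exact mul_mem_chainsOn_axisSimplices (Finset.disjoint_singleton_left.2 hi)
      (axisPair_mem_chainsOn i rfl) ih

@[simp]
theorem boundary_crossPolytope (r : ℝ) (t : Finset ι) : boundary (crossPolytope r t) = 0 := by
  induction t using Finset.induction_on with
  | empty => simp [crossPolytope]
  | insert i t hi ih => simp [crossPolytope_insert r hi, ih]

@[simp]
theorem rename_neg_crossPolytope (r : ℝ) (t : Finset ι) :
    rename Neg.neg (crossPolytope r t) = crossPolytope r t := by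
  simp only [crossPolytope, axisPair, map_prod, map_add, rename_X, Pi.single_neg, neg_neg, add_comm]

/-- The half of the cross-polytope sphere in the coordinates `insert i t` on which the `i`-th
coordinate is nonnegative; its equator is `crossPolytope r t`. -/
def hemisphere (r : ℝ) (i : ι) (t : Finset ι) : ModTwoChain (ι → ℝ) :=
  X (Pi.single i r) * crossPolytope r t

theorem boundary_hemisphere (r : ℝ) (i : ι) (t : Finset ι) :
    boundary (hemisphere r i t) = crossPolytope r t := by
  rw [hemisphere, boundary_X_mul, boundary_crossPolytope, mul_zero, add_zero]

theorem hemisphere_add_rename_neg (r : ℝ) {i : ι} {t : Finset ι} (hi : i ∉ t) :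
    hemisphere r i t + rename Neg.neg (hemisphere r i t) = crossPolytope r (insert i t) := by
  rw [crossPolytope_insert r hi, hemisphere, map_mul, rename_X, rename_neg_crossPolytope,
    axisPair, Pi.single_neg, add_mul]

theorem hemisphere_mem_chainsOn (r : ℝ) {i : ι} {t : Finset ι} (hi : i ∉ t) :
    hemisphere r i t ∈ chainsOn (axisSimplices (insert i t) {r} (t.card + 1)) := by
  rw [Finset.insert_eq, add_comm]
  refine mul_mem_chainsOn_axisSimplices (Finset.disjoint_singleton_left.2 hi) ?_
    (crossPolytope_mem_chainsOn r t)
  simpa using X_single_mem_chainsOn_axisSimplices i abs_one (Set.mem_singleton r)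

theorem exists_boundary_eq_crossPolytope_add {a b : ℝ} (hab : a ≤ b) (t : Finset ι) :
    ∃ c ∈ chainsOn (axisSimplices t (Set.Icc a b) (t.card + 1)),
      boundary c = crossPolytope a t + crossPolytope b t := by
  induction t using Finset.induction_on with
  | empty => exact ⟨0, Submodule.zero_mem _, by simp [crossPolytope, CharTwo.add_self_eq_zero]⟩
  | insert i t hi ih =>
    obtain ⟨c, hc, hboundary⟩ := ih
    have ha : a ∈ Set.Icc a b := Set.left_mem_Icc.2 hab
    have hb : b ∈ Set.Icc a b := Set.right_mem_Icc.2 hab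
    set e : ModTwoChain (ι → ℝ) :=
      X (Pi.single i a) * X (Pi.single i b) + X (Pi.single i (-a)) * X (Pi.single i (-b))
    have he : e ∈ chainsOn (axisSimplices {i} (Set.Icc a b) 2) := by
      refine Submodule.add_mem _ ?_ ?_
      · simpa using X_single_mul_X_single_mem_chainsOn_axisSimplices i abs_one ha hb
      · simpa using X_single_mul_X_single_mem_chainsOn_axisSimplices i (σ := -1) (by simp) ha hb
    have hboundary_e : boundary e = axisPair i a + axisPair i b := by
      simp only [e, axisPair, map_add, boundary_X_mul, boundary_X, mul_one]
      ring
    have hdisj : Disjoint {i} t := Finset.disjoint_singleton_left.2 hi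
    refine ⟨axisPair i a * c + e * crossPolytope b t, Submodule.add_mem _ ?_ ?_, ?_⟩
    · rw [Finset.insert_eq, Finset.card_union_of_disjoint hdisj, add_assoc]
      exact mul_mem_chainsOn_axisSimplices hdisj (axisPair_mem_chainsOn i ha) hc
    · rw [Finset.card_insert_of_notMem hi, Finset.insert_eq, add_assoc, add_comm]
      exact mul_mem_chainsOn_axisSimplices hdisj he (restrictSupport_mono _
        (axisSimplices_mono (Set.singleton_subset_iff.2 hb) _ _) (crossPolytope_mem_chainsOn b t))
    · rw [crossPolytope_insert a hi, crossPolytope_insert b hi, map_add, Derivation.leibniz,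
        Derivation.leibniz, boundary_axisPair, boundary_crossPolytope, hboundary, hboundary_e]
      simp only [smul_eq_mul, mul_zero, add_zero, zero_add]
      linear_combination (axisPair i a * crossPolytope b t) *
        CharTwo.two_eq_zero (R := ModTwoChain (ι → ℝ))

variable [Fintype ι]

theorem convexHull_subset_l1Shell {T : Set ℝ} (hT : Convex ℝ T) (hnonneg : T ⊆ Set.Ici 0)
    {t : Finset ι} {k : ℕ} {m : (ι → ℝ) →₀ ℕ} (hm : m ∈ axisSimplices t T k) :
    convexHull ℝ (m.support : Set (ι → ℝ)) ⊆ l1Shell ι T := by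
  obtain ⟨-, s, hs, hm⟩ := hm
  let coord (i : ι) : (ι → ℝ) →ₗ[ℝ] ℝ := s i • LinearMap.proj i
  let total : (ι → ℝ) →ₗ[ℝ] ℝ := ∑ i, coord i
  have htotal : ∀ x, total x = ∑ i, coord i x := LinearMap.sum_apply _ _
  have hcell : Convex ℝ ((⋂ i, coord i ⁻¹' Set.Ici 0) ∩ total ⁻¹' T) :=
    (convex_iInter fun i => (convex_Ici 0).linear_preimage (coord i)).inter
      (hT.linear_preimage total)
  have hvertex : (m.support : Set (ι → ℝ)) ⊆ (⋂ i, coord i ⁻¹' Set.Ici 0) ∩ total ⁻¹' T := by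
    intro p hp
    obtain ⟨i, -, ρ, hρ, rfl⟩ := hm p hp
    have hcoord : ∀ j, coord j (Pi.single i (s i * ρ)) = (Pi.single i ρ : ι → ℝ) j := by
      intro j
      have hsq : s i * s i = 1 := by rw [← abs_mul_abs_self, hs, one_mul]
      rcases eq_or_ne j i with rfl | hj
      · simp [coord, ← mul_assoc, hsq]
      · simp [coord, hj]
    refine ⟨Set.mem_iInter.2 fun j => ?_, ?_⟩
    · rw [Set.mem_preimage, hcoord]
      have hsingle : (0 : ι → ℝ) ≤ Pi.single i ρ := Pi.single_nonneg.2 (hnonneg hρ)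
      exact hsingle j
    · rw [Set.mem_preimage, htotal]
      simpa [hcoord] using hρ
  refine (convexHull_min hvertex hcell).trans ?_
  rintro x ⟨hpos, hsum⟩
  have habs : ∀ i, |x i| = coord i x := fun i => by
    have hi : 0 ≤ s i * x i := Set.mem_iInter.1 hpos i
    rw [← one_mul |x i|, ← hs i, ← abs_mul, abs_of_nonneg hi]
    rfl
  rw [Set.mem_preimage, htotal] at hsum
  simpa only [l1Shell, Set.mem_ofPred_eq, habs] using hsum

theorem axisSimplices_subset_fineSimplices {T : Set ℝ} (hT : Convex ℝ T) {R : ℝ}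
    (hTR : T ⊆ Set.Icc 0 R) (t : Finset ι) (k : ℕ) :
    axisSimplices t T k ⊆ fineSimplices (l1Shell ι T) k (R + R) := by
  intro m hm
  refine ⟨hm.1, convexHull_subset_l1Shell hT (hTR.trans Set.Icc_subset_Ici_self) hm, ?_⟩
  obtain ⟨-, s, hs, hm⟩ := hm
  have hnorm : ∀ p ∈ m.support, ‖p‖ ≤ R := by
    intro p hp
    obtain ⟨i, -, ρ, hρ, rfl⟩ := hm p hp
    rw [Pi.norm_single, Real.norm_eq_abs, abs_mul, hs, one_mul, abs_of_nonneg (hTR hρ).1]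
    exact (hTR hρ).2
  exact fun p hp q hq => (dist_le_norm_add_norm p q).trans (add_le_add (hnorm p hp) (hnorm q hq))

end CrossPolytope

section Labelling

open SignedIndex

variable {ι : Type*}

/-- A labelling under which no two points of `K` at distance at most `ε` have complementary
labels. -/
def IsFineLabelling [PseudoMetricSpace E] (label : E → SignedIndex ι) (K : Set E) (ε : ℝ) : Prop :=
  ∀ p ∈ K, ∀ q ∈ K, dist p q ≤ ε → index (label p) = index (label q) → label p = label q

theorem IsFineLabelling.mono [PseudoMetricSpace E] {label : E → SignedIndex ι} {K K' : Set E}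
    {ε ε' : ℝ} (h : IsFineLabelling label K' ε') (hK : K ⊆ K') (hε : ε ≤ ε') :
    IsFineLabelling label K ε :=
  fun p hp q hq hpq => h p (hK hp) q (hK hq) (hpq.trans hε)

theorem rename_mem_chainsOn_injOn_index [NormedAddCommGroup E] [NormedSpace ℝ E]
    {label : E → SignedIndex ι} {K : Set E} {k : ℕ} {ε : ℝ}
    (hfine : IsFineLabelling label K ε) {c : ModTwoChain E}
    (hc : c ∈ chainsOn (fineSimplices K k ε)) :
    rename label c ∈ chainsOn {m | m.degree = k ∧ Set.InjOn (index (ι := ι)) m.support} := by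
  classical
  refine map_mem_of_mem_chainsOn (f := (rename label).toLinearMap) ?_ hc
  rintro m ⟨hdeg, hhull, hdist⟩
  rw [AlgHom.toLinearMap_apply, rename_monomial]
  refine monomial_one_mem_chainsOn ⟨by rw [Finsupp.degree_mapDomain, hdeg], fun x hx y hy hxy => ?_⟩
  obtain ⟨p, hp, rfl⟩ := Finset.mem_image.1 (Finsupp.mapDomain_support hx)
  obtain ⟨q, hq, rfl⟩ := Finset.mem_image.1 (Finsupp.mapDomain_support hy)
  exact hfine p (hhull (subset_convexHull ℝ _ hp)) q (hhull (subset_convexHull ℝ _ hq))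
    (hdist p hp q hq) hxy

theorem rename_congr {φ ψ : E → F} {c : ModTwoChain E}
    (hc : c ∈ chainsOn {m | Set.EqOn φ ψ m.support}) :
    rename φ c = rename ψ c :=
  linearMap_eqOn_chainsOn (f := (rename φ).toLinearMap) (g := (rename ψ).toLinearMap)
    (fun m hm => by simp [rename_monomial, Finsupp.mapDomain_congr hm]) hc

section LabelCount

variable [LinearOrder ι] [AddCommGroup E] [Module ℝ E] (label : E → SignedIndex ι) (j : ℕ)

/-- The alternating count of a labelling on the `j`-fold subdivision of a chain whose simplices have
`k` vertices. -/
def labelCount (k : ℕ) (b : Bool) : ModTwoChain E →ₗ[ZMod 2] ZMod 2 :=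
  alternatingCount sign b ∘ₗ (rename label).toLinearMap ∘ₗ (subdivide k ^ j)

theorem labelCount_apply (k : ℕ) (b : Bool) (c : ModTwoChain E) :
    labelCount label j k b c = alternatingCount sign b (rename label ((subdivide k)^[j] c)) := by
  rw [labelCount, LinearMap.comp_apply, LinearMap.comp_apply, Module.End.pow_apply,
    AlgHom.toLinearMap_apply]

theorem labelCount_boundary (k : ℕ) (b : Bool) (c : ModTwoChain E) :
    labelCount label j k b (boundary c) =
      labelCount label j (k + 1) b c + labelCount label j (k + 1) (!b) c := by
  have hcomm : boundary ((subdivide (k + 1))^[j] c) = (subdivide k)^[j] (boundary c) :=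
    Function.Semiconj.iterate_right (boundary_subdivide k) j c
  simp only [labelCount_apply, ← hcomm, ← boundary_rename, alternatingCount_boundary]

end LabelCount

section Antipodal

variable [LinearOrder ι] [NormedAddCommGroup E] [NormedSpace ℝ E] {label : E → SignedIndex ι}
  {K : Set E} {j k : ℕ} {ε : ℝ} {c : ModTwoChain E}

theorem iterate_subdivide_rename_neg (j k : ℕ) (c : ModTwoChain E) :
    (subdivide k)^[j] (rename Neg.neg c) = rename Neg.neg ((subdivide k)^[j] c) :=
  (Function.Semiconj.iterate_right (rename_subdivide (-LinearMap.id) k) j c).symm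

theorem labelCount_rename_neg_of_even (heven : ∀ p ∈ K, label (-p) = label p)
    (hc : (subdivide k)^[j] c ∈ chainsOn (fineSimplices K k ε)) (b : Bool) :
    labelCount label j k b (rename Neg.neg c) = labelCount label j k b c := by
  rw [labelCount_apply, labelCount_apply, iterate_subdivide_rename_neg, rename_rename]
  congr 1
  refine rename_congr (restrictSupport_mono _ ?_ hc)
  exact fun m hm p hp => heven p (hm.2.1 (subset_convexHull ℝ _ hp))

theorem labelCount_rename_neg_of_odd (hodd : ∀ p ∈ K, label (-p) = flip (label p))
    (hfine : IsFineLabelling label K ε)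
    (hc : (subdivide k)^[j] c ∈ chainsOn (fineSimplices K k ε)) (b : Bool) :
    labelCount label j k b (rename Neg.neg c) = labelCount label j k (!b) c := by
  have hflip : rename (label ∘ Neg.neg) ((subdivide k)^[j] c) =
      rename (flip ∘ label) ((subdivide k)^[j] c) :=
    rename_congr (restrictSupport_mono _ (fun _ hm p hp =>
      hodd p (hm.2.1 (subset_convexHull ℝ _ hp)) : fineSimplices K k ε ⊆ _) hc)
  have hmono : rename label ((subdivide k)^[j] c) ∈
      chainsOn {m | StrictMonoOn (flip (ι := ι)) m.support} :=
    restrictSupport_mono _ (fun _ hm => strictMonoOn_flip hm.2)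
      (rename_mem_chainsOn_injOn_index hfine hc)
  rw [labelCount_apply, labelCount_apply, iterate_subdivide_rename_neg, rename_rename, hflip,
    ← rename_rename, alternatingCount_rename sign_flip hmono]

theorem labelCount_eq_zero_of_card_lt [Fintype ι] (hk : Fintype.card ι < k)
    (hfine : IsFineLabelling label K ε)
    (hc : (subdivide k)^[j] c ∈ chainsOn (fineSimplices K k ε)) (b : Bool) :
    labelCount label j k b c = 0 := by
  rw [labelCount_apply]
  exact alternatingCount_eq_zero_of_card_lt index hk (rename_mem_chainsOn_injOn_index hfine hc) b

end Antipodal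

section Tucker

variable [Fintype ι] [LinearOrder ι] {label : (ι → ℝ) → SignedIndex ι} {j N : ℕ} {r : ℝ}

theorem iterate_subdivide_mem_chainsOn_l1Shell {T : Set ℝ} (hT : Convex ℝ T) {R : ℝ} (hR : 0 ≤ R)
    (hTR : T ⊆ Set.Icc 0 R) {k : ℕ} (hk : k ≤ N) {t : Finset ι} {c : ModTwoChain (ι → ℝ)}
    (hc : c ∈ chainsOn (axisSimplices t T k)) :
    (subdivide k)^[j] c ∈
      chainsOn (fineSimplices (l1Shell ι T) k ((1 - (N : ℝ)⁻¹) ^ j * (R + R))) :=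
  iterate_subdivide_mem_chainsOn (add_nonneg hR hR) hk j
    (restrictSupport_mono _ (axisSimplices_subset_fineSimplices hT hTR t k) hc)

theorem iterate_subdivide_hemisphere_mem_chainsOn (hr : 0 ≤ r) (hN : Fintype.card ι ≤ N) {i : ι}
    {t : Finset ι} (hi : i ∉ t) :
    (subdivide (t.card + 1))^[j] (hemisphere r i t) ∈
      chainsOn (fineSimplices (l1Shell ι {r}) (t.card + 1) ((1 - (N : ℝ)⁻¹) ^ j * (r + r))) := by
  have hcard : t.card + 1 ≤ N :=
    Finset.card_insert_of_notMem hi ▸ (Finset.card_le_univ _).trans hN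
  exact iterate_subdivide_mem_chainsOn_l1Shell (convex_singleton r) hr
    (Set.singleton_subset_iff.2 (Set.right_mem_Icc.2 hr)) hcard (hemisphere_mem_chainsOn r hi)

theorem labelCount_crossPolytope_of_odd (hr : 0 ≤ r) (hN : Fintype.card ι ≤ N)
    (hodd : ∀ p ∈ l1Shell ι {r}, label (-p) = flip (label p))
    (hfine : IsFineLabelling label (l1Shell ι {r}) ((1 - (N : ℝ)⁻¹) ^ j * (r + r)))
    (t : Finset ι) (b : Bool) : labelCount label j t.card b (crossPolytope r t) = 1 := by
  induction t using Finset.induction_on generalizing b with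
  | empty =>
    have hid : ⇑(subdivide 0 : ModTwoChain (ι → ℝ) →ₗ[ZMod 2] _) = id := funext subdivide_zero
    rw [labelCount_apply, Finset.card_empty, hid, Function.iterate_id, id, crossPolytope,
      Finset.prod_empty, map_one, alternatingCount_one]
  | insert i t hi ih =>
    rw [← hemisphere_add_rename_neg r hi, Finset.card_insert_of_notMem hi, map_add,
      labelCount_rename_neg_of_odd hodd hfine (iterate_subdivide_hemisphere_mem_chainsOn hr hN hi),
      ← labelCount_boundary, boundary_hemisphere, ih]

theorem labelCount_crossPolytope_of_even (hr : 0 ≤ r)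
    (heven : ∀ p ∈ l1Shell ι {r}, label (-p) = label p) {t : Finset ι} (ht : t.Nonempty)
    (b : Bool) : labelCount label j t.card b (crossPolytope r t) = 0 := by
  obtain ⟨i, hi⟩ := ht
  rw [← Finset.insert_erase hi, ← hemisphere_add_rename_neg r (Finset.notMem_erase i t),
    Finset.card_insert_of_notMem (Finset.notMem_erase i t), map_add,
    labelCount_rename_neg_of_even heven
      (iterate_subdivide_hemisphere_mem_chainsOn hr le_rfl (Finset.notMem_erase i t)),
    CharTwo.add_self_eq_zero]

end Tucker

theorem not_isFineLabelling_of_odd_of_even [Fintype ι] [Nonempty ι]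
    {label : (ι → ℝ) → SignedIndex ι} {a b : ℝ} (ha : 0 ≤ a) (hab : a ≤ b)
    (hodd : ∀ p ∈ l1Shell ι {a}, label (-p) = flip (label p))
    (heven : ∀ p ∈ l1Shell ι {b}, label (-p) = label p) {ε : ℝ} (hε : 0 < ε) :
    ¬IsFineLabelling label (l1Shell ι (Set.Icc a b)) ε := by
  intro hfine
  let _ : LinearOrder ι := LinearOrder.lift' _ (Fintype.equivFin ι).injective
  set N := Fintype.card ι + 1
  have hratio : (0 : ℝ) ≤ 1 - (N : ℝ)⁻¹ := sub_nonneg.2 (Nat.cast_inv_le_one N)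
  obtain ⟨j, hj⟩ : ∃ j : ℕ, (1 - (N : ℝ)⁻¹) ^ j * (b + b) < ε := by
    have hlt : 1 - (N : ℝ)⁻¹ < 1 := sub_lt_self 1 (by positivity)
    have hlim := (tendsto_pow_atTop_nhds_zero_of_lt_one hratio hlt).mul_const (b + b)
    rw [zero_mul] at hlim
    exact (hlim.eventually_lt_const hε).exists
  obtain ⟨c, hc, hboundary⟩ := exists_boundary_eq_crossPolytope_add hab (Finset.univ : Finset ι)
  have hshell (s : Bool) : labelCount label j N s c = 0 :=
    labelCount_eq_zero_of_card_lt (Nat.lt_succ_self _) (hfine.mono subset_rfl hj.le)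
      (iterate_subdivide_mem_chainsOn_l1Shell (convex_Icc a b) (ha.trans hab)
        (Set.Icc_subset_Icc_left ha) le_rfl hc) s
  have hinner : labelCount label j (Fintype.card ι) true (crossPolytope a Finset.univ) = 1 := by
    refine labelCount_crossPolytope_of_odd ha (Nat.le_succ _) hodd (hfine.mono ?_ ?_) _ true
    · exact fun x hx => ⟨hx.ge, hx.le.trans hab⟩
    · refine le_trans ?_ hj.le
      gcongr
  have houter : labelCount label j (Fintype.card ι) true (crossPolytope b Finset.univ) = 0 :=
    labelCount_crossPolytope_of_even (ha.trans hab) heven Finset.univ_nonempty true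
  have hcount := labelCount_boundary label j (Fintype.card ι) true c
  rw [hboundary, map_add, hinner, houter, hshell, hshell] at hcount
  simp at hcount

end Labelling

end

end ModTwoChain

section Antipodes

open ModTwoChain SignedIndex

variable {ι : Type*} [Fintype ι]

theorem isCompact_l1Shell {T : Set ℝ} (hT : IsCompact T) : IsCompact (l1Shell ι T) := by
  have hcont : Continuous fun x : ι → ℝ => ∑ i, |x i| := by fun_prop
  obtain ⟨R, hR⟩ := hT.isBounded.bddAbove
  refine Metric.isCompact_of_isClosed_isBounded (hT.isClosed.preimage hcont)
    (isBounded_iff_forall_norm_le.2 ⟨R, fun x hx => ?_⟩)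
  have hsum : ∑ i, |x i| ≤ R := hR hx
  refine (pi_norm_le_iff_of_nonneg ((Finset.sum_nonneg fun i _ => abs_nonneg (x i)).trans hsum)).2
    fun i => ?_
  exact (Finset.single_le_sum (fun i _ => abs_nonneg (x i)) (Finset.mem_univ i)).trans hsum

variable [Nonempty ι]

theorem exists_mem_l1Shell_eq_zero_of_odd_of_even {a b : ℝ} (ha : 0 ≤ a) (hab : a ≤ b)
    {g : (ι → ℝ) → ι → ℝ} (hg : ContinuousOn g (l1Shell ι (Set.Icc a b)))
    (hodd : ∀ x ∈ l1Shell ι {a}, g (-x) = -g x) (heven : ∀ x ∈ l1Shell ι {b}, g (-x) = g x) :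
    ∃ x ∈ l1Shell ι (Set.Icc a b), g x = 0 := by
  by_contra! hne
  have hK : IsCompact (l1Shell ι (Set.Icc a b)) := isCompact_l1Shell isCompact_Icc
  obtain ⟨δ, hδ, hδg⟩ := hK.exists_forall_le' hg.norm fun x hx => norm_pos_iff.2 (hne x hx)
  obtain ⟨η, hη, hηg⟩ := Metric.uniformContinuousOn_iff.1
    (hK.uniformContinuousOn_of_continuous hg) δ hδ
  refine not_isFineLabelling_of_odd_of_even (label := dominant ∘ g) ha hab (fun x hx => ?_)
    (fun x hx => congrArg dominant (heven x hx)) (half_pos hη) fun x hx y hy hxy => ?_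
  · rw [Function.comp_apply, hodd x hx]
    exact dominant_neg (hne x ⟨hx.ge, hx.le.trans hab⟩)
  · exact dominant_eq_of_dist_lt
      ((hηg x hx y hy (hxy.trans_lt (half_lt_self hη))).trans_le (hδg x hx))

theorem exists_add_smul_apply_neg_eq_zero {v : EuclideanSpace ℝ ι → EuclideanSpace ℝ ι}
    (hv : ContinuousOn v (Metric.sphere 0 1)) :
    ∃ x ∈ Metric.sphere 0 1, ∃ t ∈ Set.Icc (-1 : ℝ) 1, v x + t • v (-x) = 0 := by
  let u (y : ι → ℝ) : EuclideanSpace ℝ ι := NormedSpace.normalize (WithLp.toLp 2 y)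
  have hne : ∀ y ∈ l1Shell ι (Set.Icc 1 2), WithLp.toLp 2 y ≠ 0 := by
    rintro y ⟨hy, -⟩ h0
    obtain rfl : y = 0 := (WithLp.toLp_eq_zero 2).1 h0
    norm_num at hy
  have hu : ∀ y ∈ l1Shell ι (Set.Icc 1 2), u y ∈ Metric.sphere 0 1 := fun y hy =>
    mem_sphere_zero_iff_norm.2 (NormedSpace.norm_normalize (hne y hy))
  have hu_neg (y : ι → ℝ) : u (-y) = -u y := NormedSpace.normalize_neg _
  have hu_cont : ContinuousOn u (l1Shell ι (Set.Icc 1 2)) :=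
    have hcont : Continuous (WithLp.toLp 2 : (ι → ℝ) → EuclideanSpace ℝ ι) := by fun_prop
    (hcont.norm.continuousOn.inv₀ fun y hy => norm_ne_zero_iff.2 (hne y hy)).smul
      hcont.continuousOn
  let g (y : ι → ℝ) : ι → ℝ := WithLp.ofLp (v (u y) + (2 * ∑ i, |y i| - 3) • v (-u y))
  have hg : ContinuousOn g (l1Shell ι (Set.Icc 1 2)) := by
    have hpos := hv.comp hu_cont hu
    have hneg := hv.comp hu_cont.neg fun y hy => by simpa using hu y hy
    have hcoeff : Continuous fun y : ι → ℝ => 2 * ∑ i, |y i| - 3 := by fun_prop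
    exact (PiLp.continuous_ofLp 2 _).comp_continuousOn
      (hpos.add (hcoeff.continuousOn.smul hneg))
  have hodd : ∀ y ∈ l1Shell ι {1}, g (-y) = -g y := by
    intro y (hy : ∑ i, |y i| = 1)
    norm_num [g, hu_neg, hy]
  have heven : ∀ y ∈ l1Shell ι {2}, g (-y) = g y := by
    intro y (hy : ∑ i, |y i| = 2)
    norm_num [g, hu_neg, hy, add_comm]
  obtain ⟨y, hy, hgy⟩ :=
    exists_mem_l1Shell_eq_zero_of_odd_of_even zero_le_one one_le_two hg hodd heven
  refine ⟨u y, hu y hy, 2 * ∑ i, |y i| - 3, ⟨?_, ?_⟩, WithLp.ofLp_injective 2 hgy⟩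
  · linarith [hy.1]
  · linarith [hy.2]

end Antipodes

theorem no_antipodal_to_flip_map_from_sphere_general {n k : ℕ} (hn : 0 < n) (hk : 0 < k) :
    ¬ ∃ f : Metric.sphere (0 : EuclideanSpace ℝ (Fin n)) 1 → Stiefel n (2 * k),
        Continuous f ∧ ∀ v, f (-v) = flipFrame (f v) := by
  rintro ⟨f, hf, hflip⟩
  have : Nonempty (Fin n) := ⟨⟨0, hn⟩⟩
  let i₀ : Fin (2 * k) := ⟨0, by omega⟩
  let i₁ : Fin (2 * k) := ⟨1, by omega⟩
  let g (x : Metric.sphere (0 : EuclideanSpace ℝ (Fin n)) 1) : EuclideanSpace ℝ (Fin n) :=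
    (f x).1 i₀
  let v := Function.extend Subtype.val g 0
  have hv_apply (x) : v (Subtype.val x) = g x := Subtype.val_injective.extend_apply g 0 x
  have hv : ContinuousOn v (Metric.sphere 0 1) := by
    rw [continuousOn_iff_continuous_domRestrict]
    exact ((continuous_apply i₀).comp (continuous_subtype_val.comp hf)).congr
      fun x => (hv_apply x).symm
  obtain ⟨x, hx, t, -, hzero⟩ := exists_add_smul_apply_neg_eq_zero hv
  let y : Metric.sphere (0 : EuclideanSpace ℝ (Fin n)) 1 := ⟨x, hx⟩
  have hneg : v (-x) = (f y).1 i₁ :=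
    (hv_apply (-y)).trans (congrArg (fun w : Stiefel n (2 * k) => w.1 i₀) (hflip y))
  have hdependent : (f y).1 i₀ + t • (f y).1 i₁ = 0 := by
    rwa [hneg, show v x = (f y).1 i₀ from hv_apply y] at hzero
  have hunit : ‖(f y).1 i₀‖ = 1 := (f y).2.1 i₀
  have horth : inner ℝ ((f y).1 i₀) ((f y).1 i₁) = 0 := (f y).2.2 (by simp [i₀, i₁])
  have hinner := congrArg (inner ℝ ((f y).1 i₀)) hdependent
  rw [inner_add_right, inner_smul_right, horth, real_inner_self_eq_norm_sq, hunit] at hinner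
  simp at hinner

/-- For `n = 2^r − 1` (`r > 0`) and `1 < 2k ≤ n`, there is no continuous equivariant map
`S^{n-1} → V_{n,2k}`, where `C₂` acts antipodally on the sphere and by the flip action
on the Stiefel manifold. -/
theorem no_antipodal_to_flip_map_from_sphere (r : ℕ) (hr : 0 < r) (n k : ℕ)
    (hn : n = 2 ^ r - 1) (h1 : 1 < 2 * k) (h2 : 2 * k ≤ n) :
    ¬ ∃ f : Metric.sphere (0 : EuclideanSpace ℝ (Fin n)) 1 → Stiefel n (2 * k),
        Continuous f ∧ ∀ v, f (-v) = flipFrame (f v) :=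
  no_antipodal_to_flip_map_from_sphere_general (by omega) (by omega)
end

section
/- Let n = 2^r for some r > 0 and let 1 < 2k ≤ n. There is no continuous C_2-equivariant map f : V_{n,n-1} → V_{n,2k}, where C_2 acts on V_{n,n-1} by the antipodal action a · (v_1, …, v_{n-1}) = (−v_1, …, −v_{n-1}) and on V_{n,2k} by the flip action. (V_{n,n-1} is identified with SO(n).) -/
/-!
Say that a space with involution has a hemisphere tower of dimension `m` if it contains, at every
scale, small mod 2 chains `c 0, …, c m` with `∂ (c (k + 1)) = c k + a (c k)`, as the hemispheres of
the `m`-sphere do. Three facts about towers give the theorem.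

* Borsuk-Ulam: the antipodal sphere in `ℝⁿ` has no tower of dimension `n`. If every function in a
  list of functions `s` to `ZMod 2` satisfies `s (-v) = s v + 1`, then the cup product of their
  coboundaries takes the value `1` on the tower. When the functions are the signs of the `n`
  coordinates it vanishes on small chains, since near any point some coordinate keeps its sign.
* Doubling: `O(n)` with `A ↦ -A` has a tower of dimension `n - 1` when `n = 2 ^ r`, `r > 0`. The
  product of two copies of a tower on `O(n)` of odd dimension `m` is mapped to `O(2n)` by
  `(A, B) ↦ diag(A, B)`. Its boundary relations fail above dimension `m`, but the error is
  symmetric under exchanging `A` and `B`, so the rotation from `diag(A, B)` to `diag(B, A)` fills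
  it and raises the dimension by one, to `2m + 1`.
* Suspension: an equivariant map from `O(n)` to frames `(u, w, …)` with the flip yields the path
  from `(u - w) / √2`, which is odd, to `(u + w) / √2`, which is even. Sweeping the top cycle along
  it raises the dimension of the tower to `n`, in the sphere of `ℝⁿ`: a contradiction.
-/

/-- Augmented mod 2 chains on ordered simplices of `X`, a simplex being the list of its vertices.
Repeated vertices are allowed, and the empty list spans the augmentation term in degree `-1`. -/
abbrev VertexChain (X : Type*) : Type _ := List X →₀ ZMod 2

namespace VertexChain

noncomputable section

open Function
open scoped Uniformity

variable {X Y X' Y' V M : Type*} [AddCommMonoid M] [Module (ZMod 2) M]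

/-- The basis chain of a single ordered simplex. -/
def simplex (l : List X) : VertexChain X := Finsupp.single l 1

lemma linearMap_ext {f g : VertexChain X →ₗ[ZMod 2] M}
    (h : ∀ l, f (simplex l) = g (simplex l)) : f = g :=
  Finsupp.lhom_ext' fun l => LinearMap.ext_ring (h l)

lemma linearMap_ext₂ {f g : VertexChain X →ₗ[ZMod 2] VertexChain Y →ₗ[ZMod 2] M}
    (h : ∀ l m, f (simplex l) (simplex m) = g (simplex l) (simplex m)) : f = g :=
  linearMap_ext fun l => linearMap_ext (h l)

@[simp] lemma linearCombination_simplex (f : List X → M) (l : List X) :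
    Finsupp.linearCombination (ZMod 2) f (simplex l) = f l := by
  simp [simplex]

@[simp] lemma simplex_nil_apply_nil : simplex ([] : List X) [] = 1 :=
  Finsupp.single_eq_same

@[simp] lemma simplex_cons_apply_nil (x : X) (l : List X) : simplex (x :: l) [] = 0 := by
  simp [simplex]

/-- The cone with apex `x`, which becomes the first vertex of every simplex. -/
def cone (x : X) : VertexChain X →ₗ[ZMod 2] VertexChain X :=
  Finsupp.lmapDomain (ZMod 2) (ZMod 2) (List.cons x)

@[simp] lemma cone_simplex (x : X) (l : List X) : cone x (simplex l) = simplex (x :: l) :=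
  Finsupp.mapDomain_single

@[simp] lemma cone_apply_nil (x : X) (c : VertexChain X) : cone x c [] = 0 :=
  Finsupp.mapDomain_of_notMem_range c [] (by simp)

/-- The chain map induced by a map of vertices. -/
def map (f : X → Y) : VertexChain X →ₗ[ZMod 2] VertexChain Y :=
  Finsupp.lmapDomain (ZMod 2) (ZMod 2) (List.map f)

@[simp] lemma map_simplex (f : X → Y) (l : List X) : map f (simplex l) = simplex (l.map f) :=
  Finsupp.mapDomain_single

@[simp] lemma map_id : map (id : X → X) = LinearMap.id :=
  linearMap_ext (by simp)

lemma map_map (g : Y → V) (f : X → Y) (c : VertexChain X) : map g (map f c) = map (g ∘ f) c :=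
  LinearMap.congr_fun (f := map g ∘ₗ map f) (linearMap_ext (by simp)) c

lemma map_map_of_involutive {a : X → X} (ha : Involutive a) (c : VertexChain X) :
    map a (map a c) = c := by
  rw [map_map, ha.comp_self, map_id, LinearMap.id_apply]

lemma map_map_of_semiconj {f : X → Y} {a : X → X} {b : Y → Y} (h : Semiconj f a b)
    (c : VertexChain X) : map f (map a c) = map b (map f c) := by
  rw [map_map, map_map, h.comp_eq]

lemma map_cone (f : X → Y) (x : X) (c : VertexChain X) :
    map f (cone x c) = cone (f x) (map f c) :=
  LinearMap.congr_fun (f := map f ∘ₗ cone x) (g := cone (f x) ∘ₗ map f)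
    (linearMap_ext (by simp)) c

@[simp] lemma map_apply_nil (f : X → Y) (c : VertexChain X) : map f c [] = c [] :=
  LinearMap.congr_fun (f := Finsupp.lapply [] ∘ₗ map f) (g := Finsupp.lapply [])
    (linearMap_ext fun l => by cases l <;> simp) c

/-- The boundary of an ordered simplex; the boundary of a vertex is the empty simplex. -/
def simplexBoundary : List X → VertexChain X
  | [] => 0
  | x :: l => simplex l + cone x (simplexBoundary l)

/-- The boundary operator of the augmented chain complex. The augmentation of a chain `c` is the
coefficient `boundary c []`. -/
def boundary : VertexChain X →ₗ[ZMod 2] VertexChain X :=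
  Finsupp.linearCombination (ZMod 2) simplexBoundary

@[simp] lemma boundary_simplex_nil : boundary (simplex ([] : List X)) = 0 :=
  linearCombination_simplex _ _

lemma boundary_cone (x : X) (c : VertexChain X) :
    boundary (cone x c) = c + cone x (boundary c) :=
  LinearMap.congr_fun (f := boundary ∘ₗ cone x) (g := LinearMap.id + cone x ∘ₗ boundary)
    (linearMap_ext fun l => by simp [boundary, simplexBoundary]) c

lemma boundary_simplex_cons (x : X) (l : List X) :
    boundary (simplex (x :: l)) = simplex l + cone x (boundary (simplex l)) := by
  rw [← cone_simplex, boundary_cone]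

lemma boundary_map (f : X → Y) (c : VertexChain X) : boundary (map f c) = map f (boundary c) := by
  refine LinearMap.congr_fun (f := boundary ∘ₗ map f) (g := map f ∘ₗ boundary)
    (linearMap_ext fun l => ?_) c
  induction l with
  | nil => simp
  | cons x l ih =>
    simp only [LinearMap.comp_apply, map_simplex, List.map_cons] at ih ⊢
    rw [boundary_simplex_cons, boundary_simplex_cons, map_add, map_cone, map_simplex, ih]

/-- The shuffle product of two ordered simplices: the sum of all monotone lattice paths in the
grid `l × m`, from the first vertex to the last. It vanishes when `l` or `m` is empty. -/
def simplexCross : List X → List Y → VertexChain (X × Y)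
  | [], _ => 0
  | _ :: _, [] => 0
  | x :: l, y :: m => cone (x, y)
      ((simplex l [] * simplex m []) • simplex [] + simplexCross l (y :: m) +
        simplexCross (x :: l) m)
termination_by l m => l.length + m.length

/-- The Eilenberg-Zilber cross product of chains. -/
def cross : VertexChain X →ₗ[ZMod 2] VertexChain Y →ₗ[ZMod 2] VertexChain (X × Y) :=
  Finsupp.linearCombination (ZMod 2) fun l => Finsupp.linearCombination (ZMod 2) (simplexCross l)

@[simp] lemma cross_nil_left (c : VertexChain Y) : cross (simplex ([] : List X)) c = 0 :=
  LinearMap.congr_fun (g := 0) (linearMap_ext fun m => by simp [cross, simplexCross]) c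

@[simp] lemma cross_nil_right (c : VertexChain X) : cross c (simplex ([] : List Y)) = 0 :=
  LinearMap.congr_fun (f := cross.flip (simplex [])) (g := 0)
    (linearMap_ext fun l => by cases l <;> simp [cross, simplexCross]) c

/-- The bilinear form `(c, c') ↦ ε c * ε' c'`, with values in the line of the empty simplex. -/
def nilPairing (ε : VertexChain X →ₗ[ZMod 2] ZMod 2) (ε' : VertexChain Y →ₗ[ZMod 2] ZMod 2) :
    VertexChain X →ₗ[ZMod 2] VertexChain Y →ₗ[ZMod 2] VertexChain (X × Y) :=
  ((LinearMap.mul (ZMod 2) (ZMod 2)).compl₁₂ ε ε').compr₂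
    (LinearMap.toSpanSingleton (ZMod 2) _ (simplex []))

lemma cross_cone_cone (x : X) (y : Y) (c : VertexChain X) (c' : VertexChain Y) :
    cross (cone x c) (cone y c') =
      cone (x, y) ((c [] * c' []) • simplex [] + cross c (cone y c') + cross (cone x c) c') := by
  have key : cross.compl₁₂ (cone x) (cone y) =
      (nilPairing (Finsupp.lapply []) (Finsupp.lapply []) + cross.compl₂ (cone y) +
        cross ∘ₗ cone x).compr₂ (cone (x, y)) :=
    linearMap_ext₂ fun l m => by simp [cross, simplexCross, nilPairing]
  exact LinearMap.congr_fun₂ key c c'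

/-- The augmented Leibniz rule: the correction term occurs only for two vertices. -/
lemma boundary_cross (c : VertexChain X) (c' : VertexChain Y) :
    boundary (cross c c') = cross (boundary c) c' + cross c (boundary c') +
      (boundary c [] * boundary c' []) • simplex [] := by
  refine LinearMap.congr_fun₂ (f := cross.compr₂ boundary)
    (g := cross ∘ₗ boundary + cross.compl₂ boundary +
      nilPairing (Finsupp.lapply [] ∘ₗ boundary) (Finsupp.lapply [] ∘ₗ boundary))
    (linearMap_ext₂ fun l m => ?_) c c'
  simp only [nilPairing, LinearMap.compr₂_apply, LinearMap.add_apply, LinearMap.coe_comp,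
    comp_apply, LinearMap.compl₂_apply, LinearMap.compl₁₂_apply, Finsupp.lapply_apply,
    LinearMap.mul_apply', LinearMap.toSpanSingleton_apply]
  induction l, m using simplexCross.induct with
  | case1 m => simp
  | case2 x l => simp
  | case3 x l y m ihl ihm =>
    simp only [← cone_simplex] at *
    rw [cross_cone_cone, boundary_cone]
    simp only [map_add, map_smul, ihl, ihm, boundary_cone, LinearMap.add_apply, cross_cone_cone,
      boundary_simplex_nil, Finsupp.add_apply, cone_apply_nil, smul_zero, zero_add, add_zero]
    have h := ZModModule.add_self (cone (x, y) (cross (simplex l) (simplex m)))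
    linear_combination (norm := module) h

lemma map_cross (f : X → X') (g : Y → Y') (c : VertexChain X) (c' : VertexChain Y) :
    map (Prod.map f g) (cross c c') = cross (map f c) (map g c') := by
  refine LinearMap.congr_fun₂ (f := cross.compr₂ (map (Prod.map f g)))
    (g := cross.compl₁₂ (map f) (map g)) (linearMap_ext₂ fun l m => ?_) c c'
  simp only [LinearMap.compr₂_apply, LinearMap.compl₁₂_apply]
  induction l, m using simplexCross.induct with
  | case1 m => simp
  | case2 x l => simp
  | case3 x l y m ihl ihm =>
    simp only [← cone_simplex] at *
    have hnil : map (Prod.map f g) (simplex []) = simplex [] := map_simplex _ _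
    simp only [cross_cone_cone, map_cone, map_add, map_smul, ihl, ihm, hnil, Prod.map_apply,
      map_apply_nil]

lemma map_swap_cross (c : VertexChain X) (c' : VertexChain Y) :
    map Prod.swap (cross c c') = cross c' c := by
  refine LinearMap.congr_fun₂ (f := cross.compr₂ (map Prod.swap)) (g := cross.flip)
    (linearMap_ext₂ fun l m => ?_) c c'
  simp only [LinearMap.compr₂_apply, LinearMap.flip_apply]
  induction l, m using simplexCross.induct with
  | case1 m => simp
  | case2 x l => simp
  | case3 x l y m ihl ihm =>
    simp only [← cone_simplex] at *
    simp only [cross_cone_cone, map_cone, map_add, map_smul, ihl, ihm, map_simplex, List.map_nil,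
      Prod.swap_prod_mk]
    rw [mul_comm, add_right_comm]

lemma cross_vertex {c : VertexChain X} (hc : c [] = 0) (y : Y) :
    cross c (simplex [y]) = map (fun x => (x, y)) c := by
  have key : cross.flip (simplex [y]) = map (fun x => (x, y)) +
      LinearMap.smulRight (Finsupp.lapply []) (simplex ([] : List (X × Y))) := by
    refine linearMap_ext fun l => ?_
    induction l with
    | nil => simp [ZModModule.add_self]
    | cons x l ih =>
      simp only [LinearMap.flip_apply, LinearMap.add_apply, LinearMap.smulRight_apply,
        Finsupp.lapply_apply] at ih ⊢
      rw [← cone_simplex x l, ← cone_simplex y, cross_cone_cone, cone_simplex y, ih, map_cone]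
      have h := ZModModule.add_self (simplex l [] • simplex [(x, y)])
      simp only [map_add, map_smul, cone_simplex, simplex_nil_apply_nil, simplex_cons_apply_nil,
        cross_nil_right, mul_one, add_zero, zero_smul]
      linear_combination (norm := module) h
  simpa [hc] using LinearMap.congr_fun key c

@[simp] lemma boundary_boundary (c : VertexChain X) : boundary (boundary c) = 0 := by
  refine LinearMap.congr_fun (f := boundary ∘ₗ boundary) (g := 0) (linearMap_ext fun l => ?_) c
  induction l with
  | nil => simp
  | cons x l ih =>
    simp only [LinearMap.comp_apply, LinearMap.zero_apply] at ih ⊢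
    rw [boundary_simplex_cons, map_add, boundary_cone, ih, map_zero, add_zero,
      ZModModule.add_self]

section SmallChains

variable {U : Set (X × X)} {W : Set (Y × Y)} {k : ℕ}

lemma apply_mem_of_simplex_mem {s : Set (List X)} {f : VertexChain X →ₗ[ZMod 2] M}
    {N : Submodule (ZMod 2) M} (h : ∀ l ∈ s, f (simplex l) ∈ N) {c : VertexChain X}
    (hc : c ∈ Finsupp.supported (ZMod 2) (ZMod 2) s) : f c ∈ N := by
  rw [Finsupp.supported_eq_span_single] at hc
  exact (Submodule.span_le (p := N.comap f)).2 (Set.image_subset_iff.2 h) hc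

lemma simplex_mem_supported {s : Set (List X)} {l : List X} (hl : l ∈ s) :
    simplex l ∈ Finsupp.supported (ZMod 2) (ZMod 2) s :=
  Finsupp.single_mem_supported _ _ hl

/-- The `k`-dimensional chains all of whose simplices have pairwise `U`-close vertices. -/
def smallChains (U : Set (X × X)) (k : ℕ) : Submodule (ZMod 2) (VertexChain X) :=
  Finsupp.supported (ZMod 2) (ZMod 2) {l | l.length = k + 1 ∧ ∀ x ∈ l, ∀ y ∈ l, (x, y) ∈ U}

lemma smallChains_mono {U U' : Set (X × X)} (h : U ⊆ U') (k : ℕ) :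
    smallChains U k ≤ smallChains U' k :=
  Finsupp.supported_mono fun _ hl => ⟨hl.1, fun x hx y hy => h (hl.2 x hx y hy)⟩

lemma map_mem_smallChains {f : X → Y} (hf : U ⊆ Prod.map f f ⁻¹' W) {c : VertexChain X}
    (hc : c ∈ smallChains U k) : map f c ∈ smallChains W k := by
  refine apply_mem_of_simplex_mem (fun l hl => ?_) hc
  rw [map_simplex]
  refine simplex_mem_supported ⟨by simpa using hl.1, ?_⟩
  simp only [List.forall_mem_map]
  exact fun x hx y hy => hf (hl.2 x hx y hy)

lemma apply_nil_of_mem_smallChains {c : VertexChain X} (hc : c ∈ smallChains U k) : c [] = 0 := by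
  by_contra h
  exact absurd (hc (Finsupp.mem_support_iff.2 h)).1 (by simp)

lemma boundary_apply_nil_of_mem_smallChains_succ {c : VertexChain X}
    (hc : c ∈ smallChains U (k + 1)) : boundary c [] = 0 := by
  refine (Submodule.mem_bot (ZMod 2)).1 <|
    apply_mem_of_simplex_mem (f := Finsupp.lapply [] ∘ₗ boundary) (fun l hl => ?_) hc
  match l, hl.1 with
  | x :: y :: l, _ => simp [boundary_simplex_cons]

/-- The lists of `l.length + m.length - 1` vertices of the grid `l × m`. -/
def gridLists (l : List X) (m : List Y) : Set (List (X × Y)) :=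
  {w | w.length + 1 = l.length + m.length ∧ ∀ p ∈ w, p.1 ∈ l ∧ p.2 ∈ m}

lemma cone_mem_supported_gridLists {l l' : List X} {m m' : List Y} {x : X} {y : Y}
    (hl : l' ⊆ l) (hm : m' ⊆ m) (hx : x ∈ l) (hy : y ∈ m)
    (hlen : l'.length + m'.length + 1 = l.length + m.length) {c : VertexChain (X × Y)}
    (hc : c ∈ Finsupp.supported (ZMod 2) (ZMod 2) (gridLists l' m')) :
    cone (x, y) c ∈ Finsupp.supported (ZMod 2) (ZMod 2) (gridLists l m) := by
  refine apply_mem_of_simplex_mem (fun w hw => ?_) hc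
  rw [cone_simplex]
  refine simplex_mem_supported ⟨by rw [List.length_cons, hw.1, hlen], ?_⟩
  exact List.forall_mem_cons.2 ⟨⟨hx, hy⟩, fun p hp => ⟨hl (hw.2 p hp).1, hm (hw.2 p hp).2⟩⟩

lemma cross_simplex_mem_supported_gridLists (l : List X) (m : List Y) :
    cross (simplex l) (simplex m) ∈ Finsupp.supported (ZMod 2) (ZMod 2) (gridLists l m) := by
  induction l, m using simplexCross.induct with
  | case1 m => simp
  | case2 x l => simp
  | case3 x l y m ihl ihm =>
    have expand : cross (simplex (x :: l)) (simplex (y :: m)) =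
        (simplex l [] * simplex m []) • simplex [(x, y)] +
          cone (x, y) (cross (simplex l) (simplex (y :: m))) +
            cone (x, y) (cross (simplex (x :: l)) (simplex m)) := by
      rw [← cone_simplex x l, ← cone_simplex y m, cross_cone_cone]
      simp only [map_add, map_smul, cone_simplex]
    rw [expand]
    refine add_mem (add_mem ?_ ?_) ?_
    · rcases l with - | ⟨x', l⟩
      · rcases m with - | ⟨y', m⟩
        · exact Submodule.smul_mem _ _ (simplex_mem_supported (by simp [gridLists]))
        · simp
      · simp
    · exact cone_mem_supported_gridLists (by simp) (by simp) (by simp) (by simp)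
        (by grind) ihl
    · exact cone_mem_supported_gridLists (by simp) (by simp) (by simp) (by simp)
        (by grind) ihm

lemma cross_mem_smallChains {i j : ℕ} {c : VertexChain X} {c' : VertexChain Y}
    (hc : c ∈ smallChains U i) (hc' : c' ∈ smallChains W j) :
    cross c c' ∈ smallChains (entourageProd U W) (i + j) := by
  refine apply_mem_of_simplex_mem (f := cross.flip c') (fun l hl => ?_) hc
  refine apply_mem_of_simplex_mem (f := cross (simplex l)) (fun m hm => ?_) hc'
  refine Finsupp.supported_mono ?_ (cross_simplex_mem_supported_gridLists l m)
  refine fun w hw => ⟨?_, fun p hp q hq => ?_⟩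
  · have := hw.1
    have := hl.1
    have := hm.1
    lia
  · exact ⟨hl.2 _ (hw.2 p hp).1 _ (hw.2 q hq).1, hm.2 _ (hw.2 p hp).2 _ (hw.2 q hq).2⟩

lemma exists_smallChains_one_boundary_eq [UniformSpace X] [PreconnectedSpace X] (hU : U ∈ 𝓤 X)
    (x y : X) : ∃ c ∈ smallChains U 1, boundary c = simplex [x] + simplex [y] := by
  let P (x y : X) : Prop := ∃ c ∈ smallChains U 1, boundary c = simplex [x] + simplex [y]
  have symm : Std.Symm P := ⟨fun x y ⟨c, hc, h⟩ => ⟨c, hc, h.trans (add_comm _ _)⟩⟩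
  refine PreconnectedSpace.induction₂ P (fun x => ?_) ⟨?_⟩ x y
  · have hsymm : ∀ᶠ y in nhds x, (x, y) ∈ U ∧ (y, x) ∈ U :=
      Filter.Eventually.and (mem_nhds_left x hU) (mem_nhds_right x hU)
    filter_upwards [hsymm] with y ⟨hxy, hyx⟩
    refine ⟨simplex [x, y], simplex_mem_supported ⟨rfl, ?_⟩, ?_⟩
    · simp [hxy, hyx, refl_mem_uniformity hU]
    · simp [boundary_simplex_cons, add_comm]
  · rintro x y z ⟨c, hc, h⟩ ⟨c', hc', h'⟩
    refine ⟨c + c', add_mem hc hc', ?_⟩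
    rw [map_add, h, h', ZModModule.add_add_add_cancel]

end SmallChains

section CupProduct

variable {s : V → ZMod 2} {S : List (V → ZMod 2)} {ν : V → V}

/-- The value on an ordered simplex of the cup product of the coboundaries of the functions in
`S`, regarded as `0`-cochains. -/
def simplexCup : List (V → ZMod 2) → List V → ZMod 2
  | [], [_] => 1
  | s :: S, v :: w :: l => (s v + s w) * simplexCup S (w :: l)
  | _, _ => 0

/-- The cochain `δs₁ ⌣ ⋯ ⌣ δsₖ` for `S = [s₁, …, sₖ]`. -/
def cupCoboundaries (S : List (V → ZMod 2)) : VertexChain V →ₗ[ZMod 2] ZMod 2 :=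
  Finsupp.linearCombination (ZMod 2) (simplexCup S)

/-- The cochain `s ⌣ δs₁ ⌣ ⋯ ⌣ δsₖ` for `S = [s₁, …, sₖ]`. -/
def cupPrimitive (s : V → ZMod 2) (S : List (V → ZMod 2)) : VertexChain V →ₗ[ZMod 2] ZMod 2 :=
  Finsupp.linearCombination (ZMod 2) fun l => (l.head?.elim 0 s) * simplexCup S l

lemma simplexCup_nil (S : List (V → ZMod 2)) : simplexCup S [] = 0 := by
  cases S <;> rfl

@[simp] lemma cupCoboundaries_simplex (S : List (V → ZMod 2)) (l : List V) :
    cupCoboundaries S (simplex l) = simplexCup S l :=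
  linearCombination_simplex _ _

@[simp] lemma cupPrimitive_simplex (s : V → ZMod 2) (S : List (V → ZMod 2)) (l : List V) :
    cupPrimitive s S (simplex l) = l.head?.elim 0 s * simplexCup S l :=
  linearCombination_simplex _ _

lemma cupPrimitive_cone (s : V → ZMod 2) (S : List (V → ZMod 2)) (v : V) (c : VertexChain V) :
    cupPrimitive s S (cone v c) = s v * cupCoboundaries S (cone v c) :=
  LinearMap.congr_fun (f := cupPrimitive s S ∘ₗ cone v)
    (g := s v • cupCoboundaries S ∘ₗ cone v) (linearMap_ext (by simp)) c

lemma cupCoboundaries_nil (c : VertexChain V) : cupCoboundaries [] c = boundary c [] := by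
  refine LinearMap.congr_fun (g := Finsupp.lapply [] ∘ₗ boundary) (linearMap_ext fun l => ?_) c
  match l with
  | [] => simp [simplexCup]
  | [x] => simp [simplexCup, boundary_simplex_cons]
  | x :: y :: l => simp [simplexCup, boundary_simplex_cons]

lemma cupPrimitive_boundary_of_cocycle (hS : ∀ c, cupCoboundaries S (boundary c) = 0)
    (s : V → ZMod 2) (c : VertexChain V) :
    cupPrimitive s S (boundary c) = cupCoboundaries (s :: S) c := by
  refine LinearMap.congr_fun (f := cupPrimitive s S ∘ₗ boundary) (linearMap_ext fun l => ?_) c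
  rcases l with - | ⟨v, l⟩
  · simp [simplexCup]
  have hcone : cupCoboundaries S (cone v (boundary (simplex l))) = simplexCup S l := by
    have h := hS (simplex (v :: l))
    rwa [boundary_simplex_cons, map_add, CharTwo.add_eq_zero, cupCoboundaries_simplex,
      eq_comm] at h
  rw [LinearMap.comp_apply, boundary_simplex_cons, map_add, cupPrimitive_cone, hcone]
  rcases l with - | ⟨w, l⟩
  · simp [simplexCup, simplexCup_nil]
  · simp only [cupPrimitive_simplex, cupCoboundaries_simplex, simplexCup, List.head?_cons,
      Option.elim_some]
    ring

lemma cupCoboundaries_boundary (S : List (V → ZMod 2)) (c : VertexChain V) :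
    cupCoboundaries S (boundary c) = 0 := by
  induction S generalizing c with
  | nil => rw [cupCoboundaries_nil, boundary_boundary, Finsupp.zero_apply]
  | cons s S ih => rw [← cupPrimitive_boundary_of_cocycle ih, boundary_boundary, map_zero]

lemma cupPrimitive_boundary (s : V → ZMod 2) (S : List (V → ZMod 2)) (c : VertexChain V) :
    cupPrimitive s S (boundary c) = cupCoboundaries (s :: S) c :=
  cupPrimitive_boundary_of_cocycle (cupCoboundaries_boundary S) s c

lemma simplexCup_map (hS : ∀ s ∈ S, ∀ v, s (ν v) = s v + 1) (l : List V) :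
    simplexCup S (l.map ν) = simplexCup S l := by
  induction S generalizing l with
  | nil => match l with | [] | [_] | _ :: _ :: _ => rfl
  | cons s S ih =>
    obtain ⟨hs, hS⟩ := List.forall_mem_cons.1 hS
    match l with
    | [] | [_] => rfl
    | v :: w :: l =>
      have hdiff : s (ν v) + s (ν w) = s v + s w := by
        rw [hs, hs, add_add_add_comm, CharTwo.add_self_eq_zero, add_zero]
      have htail := ih hS (w :: l)
      simp only [List.map_cons, simplexCup] at htail ⊢
      rw [hdiff, htail]

lemma cupPrimitive_add_map (hs : ∀ v, s (ν v) = s v + 1)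
    (hS : ∀ s ∈ S, ∀ v, s (ν v) = s v + 1) (c : VertexChain V) :
    cupPrimitive s S (c + map ν c) = cupCoboundaries S c := by
  refine LinearMap.congr_fun (f := cupPrimitive s S ∘ₗ (LinearMap.id + map ν))
    (linearMap_ext fun l => ?_) c
  rcases l with - | ⟨v, l⟩
  · simp [simplexCup_nil]
  · have hcup := simplexCup_map hS (v :: l)
    simp only [LinearMap.comp_apply, LinearMap.add_apply, LinearMap.id_apply, map_add,
      map_simplex, cupPrimitive_simplex, cupCoboundaries_simplex, List.map_cons,
      List.head?_cons, Option.elim_some, hs] at hcup ⊢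
    rw [hcup]
    linear_combination s v * CharTwo.add_self_eq_zero (simplexCup S (v :: l))

lemma simplexCup_eq_zero_of_const (hs : s ∈ S) {l : List V} (hl : ∀ v ∈ l, ∀ w ∈ l, s v = s w) :
    simplexCup S l = 0 := by
  induction S generalizing l with
  | nil => simp at hs
  | cons t S ih =>
    match l with
    | [] | [_] => rfl
    | v :: w :: l =>
      rw [simplexCup]
      rcases List.mem_cons.1 hs with rfl | hs
      · rw [hl v (by simp) w (by simp), CharTwo.add_self_eq_zero, zero_mul]
      · rw [ih hs fun x hx y hy => hl x (.tail v hx) y (.tail v hy), mul_zero]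

end CupProduct

section HemisphereTower

variable {U : Set (X × X)} {a : X → X} {b : Y → Y} {m k : ℕ} {c : ℕ → VertexChain X}

/-- A tower of `U`-small chains in a space with involution `a` that imitates the hemispheres of the
`m`-sphere with the antipodal map: `c k` is the upper hemisphere of the `k`-dimensional sphere, and
its boundary is the equator, the union of `c (k - 1)` and of the antipode of `c (k - 1)`. -/
structure IsHemisphereTower (U : Set (X × X)) (a : X → X) (m : ℕ) (c : ℕ → VertexChain X) :
    Prop where
  mem_smallChains (k : ℕ) : c k ∈ smallChains U k
  eq_zero {k : ℕ} (hk : m < k) : c k = 0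
  boundary_zero : boundary (c 0) = simplex []
  boundary_succ {k : ℕ} (hk : k < m) : boundary (c (k + 1)) = c k + map a (c k)

/-- The space `X` with the involution `a` contains arbitrarily fine `m`-dimensional hemisphere
towers. This is a chain-level substitute for an equivariant map from the `m`-sphere. -/
def HasHemisphereTower [UniformSpace X] (a : X → X) (m : ℕ) : Prop :=
  ∀ U ∈ 𝓤 X, ∃ c, IsHemisphereTower U a m c

lemma IsHemisphereTower.of_semiconj {W : Set (Y × Y)} (hc : IsHemisphereTower U a m c) {f : X → Y}
    (hf : Semiconj f a b) (hUW : U ⊆ Prod.map f f ⁻¹' W) :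
    IsHemisphereTower W b m fun k => map f (c k) where
  mem_smallChains k := map_mem_smallChains hUW (hc.mem_smallChains k)
  eq_zero hk := by rw [hc.eq_zero hk, map_zero]
  boundary_zero := by rw [boundary_map, hc.boundary_zero, map_simplex, List.map_nil]
  boundary_succ hk := by
    rw [boundary_map, hc.boundary_succ hk, map_add, map_map_of_semiconj hf]

lemma HasHemisphereTower.of_semiconj [UniformSpace X] [UniformSpace Y] (h : HasHemisphereTower a m)
    {f : X → Y} (hf : Semiconj f a b) (hfu : UniformContinuous f) : HasHemisphereTower b m := by
  intro W hW
  obtain ⟨c, hc⟩ := h _ (hfu hW)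
  exact ⟨_, hc.of_semiconj hf subset_rfl⟩

lemma IsHemisphereTower.cupCoboundaries_eq_one {V : Type*} {U : Set (V × V)} {ν : V → V}
    {c : ℕ → VertexChain V} (hc : IsHemisphereTower U ν m c) {S : List (V → ZMod 2)}
    (hS : ∀ s ∈ S, ∀ v, s (ν v) = s v + 1) (hm : S.length ≤ m) :
    cupCoboundaries S (c S.length) = 1 := by
  induction S with
  | nil => rw [cupCoboundaries_nil, List.length_nil, hc.boundary_zero, simplex_nil_apply_nil]
  | cons s S ih =>
    obtain ⟨hs, hS⟩ := List.forall_mem_cons.1 hS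
    rw [List.length_cons] at hm ⊢
    rw [← cupPrimitive_boundary, hc.boundary_succ hm, cupPrimitive_add_map hs hS,
      ih hS (Nat.le_of_succ_le hm)]

lemma boundary_cross_of_boundary_eq_add {c : VertexChain X} (hc : c [] = 0) {e : VertexChain Y}
    {y y' : Y} (he : boundary e = simplex [y] + simplex [y']) :
    boundary (cross c e) =
      cross (boundary c) e + map (fun x => (x, y)) c + map (fun x => (x, y')) c := by
  rw [boundary_cross, he, map_add, cross_vertex hc, cross_vertex hc, ← add_assoc]
  simp

lemma exists_invariant_entourage [UniformSpace X] (ha : Involutive a) (hau : UniformContinuous a)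
    (hU : U ∈ 𝓤 X) : ∃ U' ∈ 𝓤 X, U' ⊆ U ∧ U' ⊆ Prod.map a a ⁻¹' U' := by
  refine ⟨U ∩ Prod.map a a ⁻¹' U, Filter.inter_mem hU (hau hU), Set.inter_subset_left, ?_⟩
  rintro ⟨x, y⟩ ⟨hxy, haxy⟩
  exact ⟨haxy, by simpa [ha x, ha y] using hxy⟩

/-- The cycle formed by the two top-dimensional hemispheres. -/
def topCycle (a : X → X) (m : ℕ) (c : ℕ → VertexChain X) : VertexChain X := c m + map a (c m)

lemma map_topCycle (ha : Involutive a) (m : ℕ) (c : ℕ → VertexChain X) :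
    map a (topCycle a m c) = topCycle a m c := by
  rw [topCycle, map_add, map_map_of_involutive ha, add_comm]

lemma topCycle_mem_smallChains (hc : IsHemisphereTower U a m c) (hU : U ⊆ Prod.map a a ⁻¹' U) :
    topCycle a m c ∈ smallChains U m :=
  add_mem (hc.mem_smallChains m) (map_mem_smallChains hU (hc.mem_smallChains m))

lemma boundary_topCycle (hc : IsHemisphereTower U a m c) (ha : Involutive a) :
    boundary (topCycle a m c) = 0 := by
  rw [topCycle, map_add, boundary_map]
  rcases m with - | m
  · rw [hc.boundary_zero, map_simplex, List.map_nil, ZModModule.add_self]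
  · rw [hc.boundary_succ m.lt_succ_self, map_add, map_map_of_involutive ha,
      add_comm (map a (c m)), ZModModule.add_self]

lemma IsHemisphereTower.update_succ (hc : IsHemisphereTower U a m c) {t : VertexChain X}
    (ht : t ∈ smallChains U (m + 1)) (hbt : boundary t = c m + map a (c m)) :
    IsHemisphereTower U a (m + 1) (update c (m + 1) t) where
  mem_smallChains k := by
    rcases eq_or_ne k (m + 1) with rfl | hk
    · rwa [update_self]
    · rw [update_of_ne hk]
      exact hc.mem_smallChains k
  eq_zero hk := by rw [update_of_ne hk.ne', hc.eq_zero (Nat.lt_of_succ_lt hk)]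
  boundary_zero := by rw [update_of_ne m.succ_ne_zero.symm, hc.boundary_zero]
  boundary_succ {k} hk := by
    rw [update_of_ne hk.ne]
    rcases (Nat.lt_succ_iff.1 hk).eq_or_lt with rfl | hk
    · rw [update_self, hbt]
    · rw [update_of_ne (by lia), hc.boundary_succ hk]

lemma boundary_map_cross_topCycle (hc : IsHemisphereTower U a m c) (ha : Involutive a)
    (hU : U ⊆ Prod.map a a ⁻¹' U) {e : VertexChain V} {v w : V}
    (he : boundary e = simplex [v] + simplex [w]) {H : X × V → Y}
    (hHv : Semiconj (fun x => H (x, v)) a b) (hHw : ∀ x, H (a x, w) = H (x, w)) :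
    boundary (map H (cross (topCycle a m c) e)) =
      map (fun x => H (x, v)) (c m) + map b (map (fun x => H (x, v)) (c m)) := by
  have hnil := apply_nil_of_mem_smallChains (topCycle_mem_smallChains hc hU)
  have hw : map (fun x => H (x, w)) (topCycle a m c) = 0 := by
    rw [topCycle, map_add, map_map, comp_def]
    simp only [hHw, ZModModule.add_self]
  rw [boundary_map, boundary_cross_of_boundary_eq_add hnil he, boundary_topCycle hc ha, map_zero,
    LinearMap.zero_apply, zero_add, map_add, map_map, map_map, comp_def, comp_def, hw, add_zero,
    topCycle, map_add, map_map_of_semiconj hHv]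

lemma HasHemisphereTower.succ_of_homotopy [UniformSpace X] [UniformSpace Y]
    (h : HasHemisphereTower a m) (ha : Involutive a) (hau : UniformContinuous a)
    {H : X × unitInterval → Y} (hH : UniformContinuous H)
    (hH₀ : ∀ x, H (a x, 0) = b (H (x, 0))) (hH₁ : ∀ x, H (a x, 1) = H (x, 1)) :
    HasHemisphereTower b (m + 1) := by
  intro W hW
  obtain ⟨U, hU, I, hI, hUI⟩ := entourageProd_subset (hH hW)
  obtain ⟨U', hU', hU'U, hinv⟩ := exists_invariant_entourage ha hau hU
  obtain ⟨c, hc⟩ := h U' hU'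
  obtain ⟨e, heI, he⟩ := exists_smallChains_one_boundary_eq hI (0 : unitInterval) 1
  have hz : topCycle a m c ∈ smallChains U m :=
    smallChains_mono hU'U m (topCycle_mem_smallChains hc hinv)
  have hc₀ : IsHemisphereTower W b m fun k => map (fun x => H (x, 0)) (c k) :=
    hc.of_semiconj hH₀ fun p hp =>
      hUI (a := ((p.1, 0), (p.2, 0))) ⟨hU'U hp, refl_mem_uniformity hI⟩
  exact ⟨_, hc₀.update_succ (map_mem_smallChains hUI (cross_mem_smallChains hz heI))
    (boundary_map_cross_topCycle hc ha hinv he hH₀ hH₁)⟩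

end HemisphereTower

section Doubling

open Finset.HasAntidiagonal

variable {U : Set (X × X)} {a : X → X} {b : Y → Y} {m k : ℕ} {c : ℕ → VertexChain X}

/-- The sum of all products of two hemispheres of total dimension `k`. The twist by `a` makes its
boundary the antipodally symmetric sum of two copies of the chain of dimension `k - 1`, up to a
defect that appears above dimension `m`, where the tower `c` stops. -/
def productChain (a : X → X) (c : ℕ → VertexChain X) (k : ℕ) : VertexChain (X × X) :=
  ∑ ij ∈ antidiagonal k, cross (c ij.1) (map a^[ij.1] (c ij.2))

/-- The product, of total dimension `k - 1`, of the top cycle with a hemisphere. Together with its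
image under `Prod.swap` it is the defect of `productChain` in dimension `k`. -/
def wrapChain (a : X → X) (m : ℕ) (c : ℕ → VertexChain X) (k : ℕ) : VertexChain (X × X) :=
  if m < k then cross (topCycle a m c) (c (k - (m + 1))) else 0

lemma map_iterate_of_map_eq {z : VertexChain X} (hz : map a z = z) (i : ℕ) : map a^[i] z = z := by
  induction i with
  | zero => rw [iterate_zero, map_id, LinearMap.id_apply]
  | succ i ih => rw [iterate_succ, ← map_map, hz, ih]

lemma boundary_succ_eq_add_ite (hc : IsHemisphereTower U a m c) (k : ℕ) :
    boundary (c (k + 1)) = c k + map a (c k) + if k = m then topCycle a m c else 0 := by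
  rcases lt_trichotomy k m with hk | rfl | hk
  · rw [hc.boundary_succ hk, if_neg hk.ne, add_zero]
  · rw [hc.eq_zero k.lt_succ_self, map_zero, if_pos rfl, topCycle, ZModModule.add_self]
  · rw [hc.eq_zero (Nat.lt_succ_of_lt hk), hc.eq_zero hk, if_neg hk.ne']
    simp

lemma boundary_productChain_zero (hc : IsHemisphereTower U a m c) :
    boundary (productChain a c 0) = simplex [] := by
  simp [productChain, boundary_cross, hc.boundary_zero]

lemma sum_antidiagonal_ite_fst_eq {N : Type*} [AddCommMonoid N] (m k : ℕ) (f : ℕ × ℕ → N) :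
    ∑ ij ∈ antidiagonal k, (if ij.1 = m then f ij else 0) =
      if m ≤ k then f (m, k - m) else 0 := by
  rw [← Finset.sum_filter, filter_fst_eq_antidiagonal k m]
  split_ifs <;> simp

lemma sum_antidiagonal_ite_snd_eq {N : Type*} [AddCommMonoid N] (m k : ℕ) (f : ℕ × ℕ → N) :
    ∑ ij ∈ antidiagonal k, (if ij.2 = m then f ij else 0) =
      if m ≤ k then f (k - m, m) else 0 := by
  rw [← Finset.sum_filter, filter_snd_eq_antidiagonal k m]
  split_ifs <;> simp

lemma sum_cross_boundary_left (hc : IsHemisphereTower U a m c) (ha : Involutive a) (hm : Odd m)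
    (k : ℕ) :
    ∑ ij ∈ antidiagonal (k + 1), cross (boundary (c ij.1)) (map a^[ij.1] (c ij.2)) =
      ∑ ij ∈ antidiagonal k, cross (c ij.1) (map a^[ij.1 + 1] (c ij.2)) +
        map (Prod.map a a) (productChain a c k) + wrapChain a m c (k + 1) := by
  have hwrap : wrapChain a m c (k + 1) = ∑ ij ∈ antidiagonal k,
      if ij.1 = m then cross (topCycle a m c) (map a^[ij.1 + 1] (c ij.2)) else 0 := by
    rw [sum_antidiagonal_ite_fst_eq, wrapChain]
    simp only [ha.iterate_even hm.add_one, map_id, LinearMap.id_apply, Nat.lt_succ_iff,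
      Nat.add_sub_add_right]
  rw [Finset.Nat.sum_antidiagonal_succ, hc.boundary_zero, cross_nil_left, zero_add, hwrap,
    productChain, map_sum, ← Finset.sum_add_distrib, ← Finset.sum_add_distrib]
  refine Finset.sum_congr rfl fun ij _ => ?_
  rw [boundary_succ_eq_add_ite hc, map_add, map_add, LinearMap.add_apply, LinearMap.add_apply,
    map_cross, map_map, ← iterate_succ']
  split_ifs <;> simp only [map_zero, LinearMap.zero_apply]

lemma sum_cross_boundary_right (hc : IsHemisphereTower U a m c) (ha : Involutive a) (k : ℕ) :
    ∑ ij ∈ antidiagonal (k + 1), cross (c ij.1) (map a^[ij.1] (boundary (c ij.2))) =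
      productChain a c k +
        ∑ ij ∈ antidiagonal k, cross (c ij.1) (map a^[ij.1 + 1] (c ij.2)) +
          map Prod.swap (wrapChain a m c (k + 1)) := by
  have hwrap : map Prod.swap (wrapChain a m c (k + 1)) = ∑ ij ∈ antidiagonal k,
      if ij.2 = m then cross (c ij.1) (topCycle a m c) else 0 := by
    rw [sum_antidiagonal_ite_snd_eq, wrapChain]
    simp [apply_ite (map Prod.swap), map_swap_cross]
  have hz := map_iterate_of_map_eq (map_topCycle ha m c)
  rw [Finset.Nat.sum_antidiagonal_succ', hc.boundary_zero, map_simplex, List.map_nil,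
    cross_nil_right, zero_add, hwrap, productChain, ← Finset.sum_add_distrib,
    ← Finset.sum_add_distrib]
  refine Finset.sum_congr rfl fun ij _ => ?_
  rw [boundary_succ_eq_add_ite hc, map_add, map_add, map_add, map_add, map_map, ← iterate_succ]
  split_ifs <;> simp only [map_zero, hz]

lemma boundary_productChain_succ (hc : IsHemisphereTower U a m c) (ha : Involutive a)
    (hm : Odd m) (k : ℕ) :
    boundary (productChain a c (k + 1)) =
      productChain a c k + map (Prod.map a a) (productChain a c k) +
        (wrapChain a m c (k + 1) + map Prod.swap (wrapChain a m c (k + 1))) := by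
  have hterm : ∀ ij ∈ antidiagonal (k + 1),
      boundary (cross (c ij.1) (map a^[ij.1] (c ij.2))) =
        cross (boundary (c ij.1)) (map a^[ij.1] (c ij.2)) +
          cross (c ij.1) (map a^[ij.1] (boundary (c ij.2))) := by
    rintro ⟨i, j⟩ hij
    have haug : boundary (c i) [] * boundary (c j) [] = 0 := by
      rw [mem_antidiagonal] at hij
      rcases i with - | i
      · obtain rfl : j = k + 1 := by lia
        rw [boundary_apply_nil_of_mem_smallChains_succ (hc.mem_smallChains _), mul_zero]
      · rw [boundary_apply_nil_of_mem_smallChains_succ (hc.mem_smallChains _), zero_mul]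
    rw [boundary_cross, boundary_map, map_apply_nil, haug, zero_smul, add_zero]
  rw [productChain, map_sum, Finset.sum_congr rfl hterm, Finset.sum_add_distrib,
    sum_cross_boundary_left hc ha hm, sum_cross_boundary_right hc ha]
  have hdouble := ZModModule.add_self
    (∑ ij ∈ antidiagonal k, cross (c ij.1) (map a^[ij.1 + 1] (c ij.2)))
  linear_combination (norm := module) hdouble

lemma boundary_wrapChain_succ (hc : IsHemisphereTower U a m c) (ha : Involutive a)
    (hk : k ≤ 2 * m) :
    boundary (wrapChain a m c (k + 1)) =
      wrapChain a m c k + map (Prod.map a a) (wrapChain a m c k) := by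
  have hcross (j : ℕ) : boundary (cross (topCycle a m c) (c j)) =
      cross (topCycle a m c) (boundary (c j)) := by
    simp [boundary_cross, boundary_topCycle hc ha]
  rcases lt_trichotomy k m with hkm | rfl | hkm
  · rw [wrapChain, wrapChain, if_neg (by lia), if_neg hkm.not_gt]
    simp
  · simp [wrapChain, hcross, hc.boundary_zero]
  · obtain ⟨j, rfl⟩ := Nat.exists_eq_add_of_le (Nat.succ_le_of_lt hkm)
    rw [wrapChain, wrapChain, if_pos (by lia), if_pos hkm, hcross, add_assoc m.succ,
      Nat.succ_eq_add_one, Nat.add_sub_cancel_left, Nat.add_sub_cancel_left,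
      hc.boundary_succ (by lia), map_add, map_cross, map_topCycle ha]

lemma productChain_mem_smallChains (hc : IsHemisphereTower U a m c)
    (hU : U ⊆ Prod.map a a ⁻¹' U) (k : ℕ) :
    productChain a c k ∈ smallChains (entourageProd U U) k := by
  have hiter (i : ℕ) : U ⊆ Prod.map a^[i] a^[i] ⁻¹' U := by
    rw [← Prod.map_iterate]
    exact Set.MapsTo.iterate hU i
  refine sum_mem fun ij hij => ?_
  rw [← mem_antidiagonal.1 hij]
  exact cross_mem_smallChains (hc.mem_smallChains _)
    (map_mem_smallChains (hiter _) (hc.mem_smallChains _))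

lemma wrapChain_zero : wrapChain a m c 0 = 0 :=
  if_neg m.not_lt_zero

lemma wrapChain_succ_mem_smallChains (hc : IsHemisphereTower U a m c)
    (hU : U ⊆ Prod.map a a ⁻¹' U) (k : ℕ) :
    wrapChain a m c (k + 1) ∈ smallChains (entourageProd U U) k := by
  rw [wrapChain]
  split_ifs with hk
  · obtain ⟨j, rfl⟩ := Nat.exists_eq_add_of_le (Nat.lt_succ_iff.1 hk)
    rw [Nat.add_sub_add_right, Nat.add_sub_cancel_left]
    exact cross_mem_smallChains (topCycle_mem_smallChains hc hU) (hc.mem_smallChains j)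
  · exact zero_mem _

lemma wrapChain_apply_nil (hc : IsHemisphereTower U a m c)
    (hU : U ⊆ Prod.map a a ⁻¹' U) (k : ℕ) : wrapChain a m c k [] = 0 := by
  rcases k with - | k
  · rw [wrapChain_zero, Finsupp.zero_apply]
  · exact apply_nil_of_mem_smallChains (wrapChain_succ_mem_smallChains hc hU k)

lemma productChain_eq_zero (hc : IsHemisphereTower U a m c) (hk : 2 * m < k) :
    productChain a c k = 0 := by
  refine Finset.sum_eq_zero fun ij hij => ?_
  have hij := mem_antidiagonal.1 hij
  rcases lt_or_ge m ij.1 with hi | hi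
  · rw [hc.eq_zero hi, map_zero, LinearMap.zero_apply]
  · rw [hc.eq_zero (k := ij.2) (by lia), map_zero, map_zero]

lemma wrapChain_eq_zero (hc : IsHemisphereTower U a m c) (hk : 2 * m + 1 < k) :
    wrapChain a m c k = 0 := by
  rw [wrapChain, hc.eq_zero (k := k - (m + 1)) (by lia), map_zero, ite_self]

variable {W : Set (Y × Y)} {I : Set (V × V)} {v w : V} {e : VertexChain V} {F : (X × X) × V → Y}

/-- The chains of the doubled tower: the map `F (·, v)` on the products of hemispheres, corrected
by the trace of the homotopy `F` along the edge `e` on the defect. -/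
def doubledChain (a : X → X) (m : ℕ) (c : ℕ → VertexChain X) (F : (X × X) × V → Y) (v : V)
    (e : VertexChain V) (k : ℕ) : VertexChain Y :=
  map (fun p => F (p, v)) (productChain a c k) + map F (cross (wrapChain a m c k) e)

lemma map_doubledChain (hFa : ∀ p t, F (Prod.map a a p, t) = b (F (p, t))) (k : ℕ) :
    map b (doubledChain a m c F v e k) =
      map (fun p => F (p, v)) (map (Prod.map a a) (productChain a c k)) +
        map F (cross (map (Prod.map a a) (wrapChain a m c k)) e) := by
  have hF : Semiconj F (Prod.map (Prod.map a a) id) b := fun x => hFa x.1 x.2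
  have hFv : Semiconj (fun p => F (p, v)) (Prod.map a a) b := fun p => hFa p v
  have hcross := map_cross (Prod.map a a) id (wrapChain a m c k) e
  rw [map_id, LinearMap.id_apply] at hcross
  rw [doubledChain, map_add, map_map_of_semiconj hFv, ← hcross, map_map_of_semiconj hF]

lemma boundary_doubledChain_succ (hc : IsHemisphereTower U a m c) (ha : Involutive a)
    (hm : Odd m) (hU : U ⊆ Prod.map a a ⁻¹' U) (he : boundary e = simplex [v] + simplex [w])
    (hFa : ∀ p t, F (Prod.map a a p, t) = b (F (p, t)))
    (hFs : ∀ p, F (p, w) = F (p.swap, v)) (hk : k < 2 * m + 1) :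
    boundary (doubledChain a m c F v e (k + 1)) =
      doubledChain a m c F v e k + map b (doubledChain a m c F v e k) := by
  have hswap : map (fun p => F (p, w)) (wrapChain a m c (k + 1)) =
      map (fun p => F (p, v)) (map Prod.swap (wrapChain a m c (k + 1))) := by
    rw [map_map]
    exact congrArg (fun f => map f _) (funext hFs)
  have hwrap : boundary (map F (cross (wrapChain a m c (k + 1)) e)) =
      map F (cross (wrapChain a m c k) e) +
        map F (cross (map (Prod.map a a) (wrapChain a m c k)) e) +
        (map (fun p => F (p, v)) (wrapChain a m c (k + 1)) +
          map (fun p => F (p, v)) (map Prod.swap (wrapChain a m c (k + 1)))) := by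
    rw [boundary_map, boundary_cross_of_boundary_eq_add (wrapChain_apply_nil hc hU _) he,
      boundary_wrapChain_succ hc ha (Nat.lt_succ_iff.1 hk), ← hswap]
    simp only [map_add, LinearMap.add_apply, map_map, comp_def, add_assoc]
  have hdouble := ZModModule.add_self (map (fun p => F (p, v)) (wrapChain a m c (k + 1)) +
    map (fun p => F (p, v)) (map Prod.swap (wrapChain a m c (k + 1))))
  rw [map_doubledChain hFa, doubledChain, doubledChain, map_add, hwrap, boundary_map,
    boundary_productChain_succ hc ha hm, map_add, map_add, map_add]
  linear_combination (norm := module) hdouble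

lemma IsHemisphereTower.doubling (hc : IsHemisphereTower U a m c) (ha : Involutive a)
    (hm : Odd m) (hU : U ⊆ Prod.map a a ⁻¹' U) (hvI : (v, v) ∈ I) (heI : e ∈ smallChains I 1)
    (he : boundary e = simplex [v] + simplex [w])
    (hFW : entourageProd (entourageProd U U) I ⊆ Prod.map F F ⁻¹' W)
    (hFa : ∀ p t, F (Prod.map a a p, t) = b (F (p, t)))
    (hFs : ∀ p, F (p, w) = F (p.swap, v)) :
    IsHemisphereTower W b (2 * m + 1) (doubledChain a m c F v e) where
  mem_smallChains k := by
    refine add_mem (map_mem_smallChains ?_ (productChain_mem_smallChains hc hU k)) ?_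
    · exact fun pq hpq => hFW (a := ((pq.1, v), (pq.2, v))) ⟨hpq, hvI⟩
    rcases k with - | k
    · simp [wrapChain_zero]
    · exact map_mem_smallChains hFW
        (cross_mem_smallChains (wrapChain_succ_mem_smallChains hc hU k) heI)
  eq_zero hk := by
    rw [doubledChain, productChain_eq_zero hc (by lia), wrapChain_eq_zero hc hk]
    simp
  boundary_zero := by
    rw [doubledChain, wrapChain_zero, map_zero, LinearMap.zero_apply, map_zero, add_zero,
      boundary_map, boundary_productChain_zero hc, map_simplex, List.map_nil]
  boundary_succ hk := boundary_doubledChain_succ hc ha hm hU he hFa hFs hk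

lemma HasHemisphereTower.doubling [UniformSpace X] [UniformSpace Y]
    (h : HasHemisphereTower a m) (ha : Involutive a) (hau : UniformContinuous a) (hm : Odd m)
    {F : (X × X) × unitInterval → Y} (hF : UniformContinuous F)
    (hFa : ∀ p t, F (Prod.map a a p, t) = b (F (p, t)))
    (hFs : ∀ p, F (p, 1) = F (p.swap, 0)) : HasHemisphereTower b (2 * m + 1) := by
  intro W hW
  obtain ⟨P, hP, I, hI, hPI⟩ := entourageProd_subset (hF hW)
  obtain ⟨U₁, hU₁, U₂, hU₂, hU⟩ := entourageProd_subset hP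
  obtain ⟨U', hU', hU'U, hinv⟩ := exists_invariant_entourage ha hau (Filter.inter_mem hU₁ hU₂)
  obtain ⟨c, hc⟩ := h U' hU'
  obtain ⟨e, heI, he⟩ := exists_smallChains_one_boundary_eq hI (0 : unitInterval) 1
  refine ⟨_, hc.doubling ha hm hinv (refl_mem_uniformity hI) heI he ?_ hFa hFs⟩
  exact fun x hx => hPI ⟨hU ⟨(hU'U hx.1.1).1, (hU'U hx.1.2).2⟩, hx.2⟩

end Doubling

section Base

variable {U : Set (X × X)} {a : X → X}

lemma isHemisphereTower_zero {x : X} (hx : (x, x) ∈ U) (a : X → X) :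
    IsHemisphereTower U a 0 (Pi.single 0 (simplex [x])) where
  mem_smallChains k := by
    rcases k with - | k
    · exact simplex_mem_supported ⟨rfl, by simpa using hx⟩
    · exact zero_mem _
  eq_zero hk := Pi.single_eq_of_ne hk.ne' _
  boundary_zero := by simp [boundary_simplex_cons]
  boundary_succ hk := absurd hk (Nat.not_lt_zero _)

lemma hasHemisphereTower_one_of_path [UniformSpace X] {x : X} (γ : Path x (a x)) :
    HasHemisphereTower a 1 := by
  intro U hU
  have hγ : UniformContinuous γ := CompactSpace.uniformContinuous_of_continuous γ.continuous
  obtain ⟨e, heU, he⟩ := exists_smallChains_one_boundary_eq (hγ hU) (0 : unitInterval) 1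
  refine ⟨_, (isHemisphereTower_zero (x := x) (refl_mem_uniformity hU) a).update_succ
    (map_mem_smallChains subset_rfl heU) ?_⟩
  rw [boundary_map, he, map_add]
  simp

end Base

section Sphere

lemma exists_odd_sign {L : Type*} [LinearOrder L] {ν : V → V} (hν : Involutive ν)
    (hfix : ∀ v, ν v ≠ v) (f : V → L) :
    ∃ s : V → ZMod 2, (∀ v, s (ν v) = s v + 1) ∧
      (∀ v, f (ν v) < f v → s v = 1) ∧ ∀ v, f v < f (ν v) → s v = 0 := by
  classical
  let _ : LinearOrder V := linearOrderOfSTO WellOrderingRel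
  let g (v : V) : L ×ₗ V := toLex (f v, v)
  have hg (v : V) : g (ν v) ≠ g v := fun h => hfix v (congrArg (fun p => (ofLex p).2) h)
  refine ⟨fun v => if g (ν v) < g v then 1 else 0, fun v => ?_, fun v hv => ?_, fun v hv => ?_⟩
  · simp only [hν v]
    rcases (hg v).lt_or_gt with h | h
    · simp [h, h.not_gt, CharTwo.add_self_eq_zero]
    · simp [h, h.not_gt]
  · exact if_pos (Prod.Lex.toLex_lt_toLex.2 (.inl hv))
  · exact if_neg (Prod.Lex.toLex_lt_toLex.2 (.inl hv)).not_gt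

variable {ι : Type*} [Fintype ι]

lemma exists_inv_card_add_one_lt_abs_apply {v : EuclideanSpace ℝ ι} (hv : ‖v‖ = 1) :
    ∃ i, ((Fintype.card ι : ℝ) + 1)⁻¹ < |v i| := by
  by_contra! hsmall
  have habs (i : ι) : |v i| ≤ 1 := hv ▸ PiLp.norm_apply_le v i
  have : (1 : ℝ) < 1 := calc
    1 = ∑ i, v i ^ 2 := by rw [← EuclideanSpace.real_norm_sq_eq, hv, one_pow]
    _ ≤ ∑ i, |v i| := Finset.sum_le_sum fun i _ => by
      rw [← sq_abs]
      exact pow_le_of_le_one (abs_nonneg _) (habs i) two_ne_zero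
    _ ≤ ∑ _i : ι, ((Fintype.card ι : ℝ) + 1)⁻¹ := Finset.sum_le_sum fun i _ => hsmall i
    _ = Fintype.card ι / ((Fintype.card ι : ℝ) + 1) := by simp [div_eq_mul_inv]
    _ < 1 := (div_lt_one (by positivity)).2 (lt_add_one _)
  exact lt_irrefl _ this

lemma cupCoboundaries_eq_zero_of_forall_exists_const {U : Set (V × V)} {k : ℕ}
    {S : List (V → ZMod 2)} (hU : ∀ v, ∃ s ∈ S, ∀ w, (v, w) ∈ U → s w = s v)
    {c : VertexChain V} (hc : c ∈ smallChains U k) : cupCoboundaries S c = 0 := by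
  refine (Submodule.mem_bot (ZMod 2)).1 (apply_mem_of_simplex_mem (fun l hl => ?_) hc)
  obtain ⟨v, hv⟩ := List.exists_mem_of_length_pos (by rw [hl.1]; exact k.succ_pos)
  obtain ⟨s, hs, hsv⟩ := hU v
  rw [Submodule.mem_bot, cupCoboundaries_simplex]
  exact simplexCup_eq_zero_of_const hs fun x hx y hy =>
    (hsv x (hl.2 v hv x hx)).trans (hsv y (hl.2 v hv y hy)).symm

theorem not_hasHemisphereTower_sphere :
    ¬ HasHemisphereTower (Neg.neg : Metric.sphere (0 : EuclideanSpace ℝ ι) 1 → _)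
      (Fintype.card ι) := by
  intro h
  choose s hodd hpos hneg using fun i : ι => exists_odd_sign neg_involutive
    (fun v => (ne_neg_of_mem_unit_sphere ℝ v).symm)
    fun v : Metric.sphere (0 : EuclideanSpace ℝ ι) 1 => v.1 i
  let S := (Finset.univ : Finset ι).toList.map s
  have hlen : S.length = Fintype.card ι := by simp [S]
  have hδ : 0 < ((Fintype.card ι : ℝ) + 1)⁻¹ := by positivity
  obtain ⟨c, hc⟩ := h _ (Metric.dist_mem_uniformity hδ)
  have hsign (v : Metric.sphere (0 : EuclideanSpace ℝ ι) 1) :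
      ∃ i, ∀ w, dist v w < ((Fintype.card ι : ℝ) + 1)⁻¹ → s i w = s i v := by
    obtain ⟨i, hi⟩ := exists_inv_card_add_one_lt_abs_apply (norm_eq_of_mem_sphere v)
    refine ⟨i, fun w hw => ?_⟩
    have hvw : |v.1 i - w.1 i| < |v.1 i| :=
      ((PiLp.norm_apply_le (v.1 - w.1) i).trans_lt (by rwa [← dist_eq_norm])).trans hi
    have hneg_apply (u : Metric.sphere (0 : EuclideanSpace ℝ ι) 1) : (-u).1 i = -u.1 i := rfl
    rw [abs_lt] at hvw
    rcases lt_or_ge 0 (v.1 i) with hvi | hvi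
    · rw [abs_of_pos hvi] at hvw
      rw [hpos i v (by linarith [hneg_apply v]), hpos i w (by linarith [hneg_apply w])]
    · rw [abs_of_nonpos hvi] at hvw
      rw [hneg i v (by linarith [hneg_apply v]), hneg i w (by linarith [hneg_apply w])]
  have hzero : cupCoboundaries S (c S.length) = 0 := by
    refine cupCoboundaries_eq_zero_of_forall_exists_const (fun v => ?_) (hc.mem_smallChains _)
    obtain ⟨i, hi⟩ := hsign v
    exact ⟨s i, by simp [S], hi⟩
  have hone := hc.cupCoboundaries_eq_one (S := S) (by simpa [S] using hodd) hlen.le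
  exact zero_ne_one (hzero.symm.trans hone)

end Sphere

end

end VertexChain

section OrthogonalGroup

open Matrix VertexChain

variable {ι κ : Type*} [Fintype ι] [DecidableEq ι] [Fintype κ] [DecidableEq κ]

instance unitaryGroup_compactSpace {𝕜 : Type*} [RCLike 𝕜] : CompactSpace (unitaryGroup ι 𝕜) := by
  have hbox : IsCompact (Set.univ.pi fun _ : ι => Set.univ.pi fun _ : ι =>
      Metric.closedBall (0 : 𝕜) 1) :=
    isCompact_univ_pi fun _ => isCompact_univ_pi fun _ => isCompact_closedBall 0 1
  refine isCompact_iff_compactSpace.1 (hbox.of_isClosed_subset (X := Matrix ι ι 𝕜)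
    (isClosed_unitary (R := Matrix ι ι 𝕜)) fun A hA i _ j _ => ?_)
  exact mem_closedBall_zero_iff.2 (entry_norm_bound_of_unitary hA i j)

lemma uniformContinuous_neg_orthogonalGroup :
    UniformContinuous (Neg.neg : orthogonalGroup ι ℝ → orthogonalGroup ι ℝ) :=
  CompactSpace.uniformContinuous_of_continuous (continuous_subtype_val.neg.subtype_mk _)

/-- The rotation by `θ` acting on `ℝ^κ ⊕ ℝ^κ = ℝ² ⊗ ℝ^κ` through the factor `ℝ²`. -/
noncomputable def blockRotation (θ : ℝ) : orthogonalGroup (κ ⊕ κ) ℝ :=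
  ⟨fromBlocks (Real.cos θ • 1) (-(Real.sin θ • 1)) (Real.sin θ • 1) (Real.cos θ • 1), by
    rw [mem_orthogonalGroup_iff, fromBlocks_transpose, fromBlocks_multiply, ← fromBlocks_one]
    have htrig : Real.cos θ * Real.cos θ + Real.sin θ * Real.sin θ = 1 := by
      simpa only [pow_two] using Real.cos_sq_add_sin_sq θ
    congr 1 <;> simp [smul_smul, ← add_smul, htrig, mul_comm, add_comm]⟩

/-- The block diagonal embedding `O(κ) × O(κ) → O(κ ⊕ κ)`. -/
def orthogonalDiag (p : orthogonalGroup κ ℝ × orthogonalGroup κ ℝ) : orthogonalGroup (κ ⊕ κ) ℝ :=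
  ⟨fromBlocks p.1 0 0 p.2, by
    simp [mem_orthogonalGroup_iff, fromBlocks_transpose, fromBlocks_multiply,
      (mem_orthogonalGroup_iff _ _).1 p.1.2, (mem_orthogonalGroup_iff _ _).1 p.2.2]⟩

lemma continuous_blockRotation : Continuous (blockRotation (κ := κ)) :=
  Continuous.subtype_mk (.matrix_fromBlocks (by fun_prop) (by fun_prop) (by fun_prop)
    (by fun_prop)) _

lemma continuous_orthogonalDiag : Continuous (orthogonalDiag (κ := κ)) :=
  Continuous.subtype_mk (.matrix_fromBlocks (by fun_prop) (by fun_prop) (by fun_prop)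
    (by fun_prop)) _

lemma blockRotation_zero : blockRotation (κ := κ) 0 = 1 := by
  apply Subtype.ext; simp [blockRotation]

lemma blockRotation_pi : blockRotation (κ := κ) Real.pi = -1 := by
  apply Subtype.ext
  rw [Unitary.coe_neg]
  simp [blockRotation, ← fromBlocks_one, fromBlocks_neg]

lemma orthogonalDiag_neg (p : orthogonalGroup κ ℝ × orthogonalGroup κ ℝ) :
    orthogonalDiag (Prod.map Neg.neg Neg.neg p) = -orthogonalDiag p := by
  apply Subtype.ext
  rw [Unitary.coe_neg]
  simp [orthogonalDiag, Unitary.coe_neg, fromBlocks_neg]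

lemma blockRotation_conj_orthogonalDiag (p : orthogonalGroup κ ℝ × orthogonalGroup κ ℝ) :
    (blockRotation (Real.pi / 2))⁻¹ * orthogonalDiag p * blockRotation (Real.pi / 2) =
      orthogonalDiag p.swap := by
  apply Subtype.ext
  simp [blockRotation, orthogonalDiag, star_eq_conjTranspose, fromBlocks_transpose,
    fromBlocks_multiply]

lemma hasHemisphereTower_orthogonalGroup_sum_one :
    HasHemisphereTower (Neg.neg : orthogonalGroup (κ ⊕ κ) ℝ → _) 1 :=
  hasHemisphereTower_one_of_path (x := 1)
    { toFun := fun t => blockRotation (Real.pi * t)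
      continuous_toFun := continuous_blockRotation.comp (by fun_prop)
      source' := by simp [blockRotation_zero]
      target' := by simp [blockRotation_pi] }

lemma hasHemisphereTower_orthogonalGroup_sum {m : ℕ} (hm : Odd m)
    (h : HasHemisphereTower (Neg.neg : orthogonalGroup κ ℝ → _) m) :
    HasHemisphereTower (Neg.neg : orthogonalGroup (κ ⊕ κ) ℝ → _) (2 * m + 1) := by
  let R (t : unitInterval) : orthogonalGroup (κ ⊕ κ) ℝ := blockRotation (Real.pi / 2 * t)
  have hR : Continuous R := continuous_blockRotation.comp (by fun_prop)
  let F (q : (orthogonalGroup κ ℝ × orthogonalGroup κ ℝ) × unitInterval) :=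
    (R q.2)⁻¹ * orthogonalDiag q.1 * R q.2
  have hF : Continuous F :=
    ((hR.comp continuous_snd).inv.mul (continuous_orthogonalDiag.comp continuous_fst)).mul
      (hR.comp continuous_snd)
  refine h.doubling neg_involutive uniformContinuous_neg_orthogonalGroup hm (F := F)
    (CompactSpace.uniformContinuous_of_continuous hF) (fun p t => ?_) fun p => ?_
  · simp [F, orthogonalDiag_neg]
  · simp [F, R, blockRotation_conj_orthogonalDiag, blockRotation_zero]

lemma hasHemisphereTower_orthogonalGroup_of_equiv {m : ℕ} (e : ι ≃ κ)
    (h : HasHemisphereTower (Neg.neg : orthogonalGroup κ ℝ → _) m) :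
    HasHemisphereTower (Neg.neg : orthogonalGroup ι ℝ → _) m := by
  let f (A : orthogonalGroup κ ℝ) : orthogonalGroup ι ℝ := ⟨A.1.submatrix e e, by
    rw [mem_unitaryGroup_iff, star_eq_conjTranspose, conjTranspose_submatrix,
      submatrix_mul_equiv, ← star_eq_conjTranspose, mem_unitaryGroup_iff.1 A.2,
      submatrix_one_equiv]⟩
  have hf : Continuous f := (continuous_subtype_val.matrix_submatrix e e).subtype_mk _
  exact h.of_semiconj (f := f) (fun A => rfl) (CompactSpace.uniformContinuous_of_continuous hf)

theorem hasHemisphereTower_orthogonalGroup_two_pow (r : ℕ) :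
    HasHemisphereTower (Neg.neg : orthogonalGroup (Fin (2 ^ (r + 1))) ℝ → _)
      (2 ^ (r + 1) - 1) := by
  induction r with
  | zero =>
    exact hasHemisphereTower_orthogonalGroup_of_equiv (finSumFinEquiv (m := 1) (n := 1)).symm
      hasHemisphereTower_orthogonalGroup_sum_one
  | succ r ih =>
    have hodd : Odd (2 ^ (r + 1) - 1) :=
      Nat.Even.sub_odd Nat.one_le_two_pow (even_two.pow_of_ne_zero r.succ_ne_zero) odd_one
    have hdim : 2 ^ (r + 2) - 1 = 2 * (2 ^ (r + 1) - 1) + 1 := by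
      have := Nat.one_le_two_pow (n := r + 1)
      lia
    rw [hdim]
    exact hasHemisphereTower_orthogonalGroup_of_equiv
      ((finCongr (by ring)).trans finSumFinEquiv.symm)
      (hasHemisphereTower_orthogonalGroup_sum hodd ih)

end OrthogonalGroup

section Stiefel

open Matrix VertexChain

section Arc

variable {E : Type*} [NormedAddCommGroup E] [InnerProductSpace ℝ E]

/-- The quarter circle in the plane of the orthonormal pair `u`, `w`, traversed by `t ∈ [0, 1]`
from the direction of `u - w` through `u` to the direction of `u + w`. -/
noncomputable def quarterArc (u w : E) (t : ℝ) : E :=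
  Real.cos (Real.pi * (t / 2 - 1 / 4)) • u + Real.sin (Real.pi * (t / 2 - 1 / 4)) • w

lemma norm_quarterArc {u w : E} (hu : ‖u‖ = 1) (hw : ‖w‖ = 1) (huw : inner ℝ u w = 0) (t : ℝ) :
    ‖quarterArc u w t‖ = 1 := by
  have hsq : ‖quarterArc u w t‖ ^ 2 = 1 := by
    rw [quarterArc, norm_add_sq_real, inner_smul_left, inner_smul_right, huw, norm_smul,
      norm_smul, hu, hw]
    simp
  exact (pow_eq_one_iff_of_nonneg (norm_nonneg _) two_ne_zero).1 hsq

lemma quarterArc_swap_zero (u w : E) : quarterArc w u 0 = -quarterArc u w 0 := by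
  have hangle : Real.pi * (0 / 2 - 1 / 4) = -(Real.pi / 4) := by ring
  rw [quarterArc, quarterArc, hangle, Real.cos_neg, Real.sin_neg, Real.cos_pi_div_four,
    Real.sin_pi_div_four]
  module

lemma quarterArc_swap_one (u w : E) : quarterArc w u 1 = quarterArc u w 1 := by
  have hangle : Real.pi * (1 / 2 - 1 / 4) = Real.pi / 4 := by ring
  rw [quarterArc, quarterArc, hangle, Real.cos_pi_div_four, Real.sin_pi_div_four, add_comm]

end Arc

variable {n j k : ℕ}

lemma continuous_frame_apply (i : Fin j) : Continuous fun v : Stiefel n j => v.1 i :=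
  (continuous_apply i).comp continuous_subtype_val

theorem not_exists_continuous_equivariant_flipFrame {X : Type*} [UniformSpace X] [CompactSpace X]
    {a : X → X} (ha : Function.Involutive a) (hac : Continuous a)
    (h : HasHemisphereTower a (n - 1)) (hn : 0 < n) (hk : 0 < k) :
    ¬ ∃ f : X → Stiefel n (2 * k), Continuous f ∧ ∀ x, f (a x) = flipFrame (f x) := by
  rintro ⟨f, hf, hfa⟩
  let u (x : X) := (f x).1 ⟨0, by lia⟩
  let w (x : X) := (f x).1 ⟨1, by lia⟩
  have hu : Continuous u := (continuous_frame_apply _).comp hf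
  have hw : Continuous w := (continuous_frame_apply _).comp hf
  have hua (x : X) : u (a x) = w x := congrArg (fun v => v.1 ⟨0, by lia⟩) (hfa x)
  have hwa (x : X) : w (a x) = u x := congrArg (fun v => v.1 ⟨1, by lia⟩) (hfa x)
  let H (q : X × unitInterval) : Metric.sphere (0 : EuclideanSpace ℝ (Fin n)) 1 :=
    ⟨quarterArc (u q.1) (w q.1) q.2, mem_sphere_zero_iff_norm.2
      (norm_quarterArc ((f q.1).2.1 _) ((f q.1).2.1 _) ((f q.1).2.2 (by simp)) _)⟩
  have hH : Continuous H := by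
    refine Continuous.subtype_mk ?_ _
    unfold quarterArc
    fun_prop
  have hsphere : HasHemisphereTower (Neg.neg : Metric.sphere (0 : EuclideanSpace ℝ (Fin n)) 1 → _)
      (n - 1 + 1) := by
    refine h.succ_of_homotopy ha (CompactSpace.uniformContinuous_of_continuous hac)
      (CompactSpace.uniformContinuous_of_continuous hH)
      (fun x => Subtype.ext ?_) fun x => Subtype.ext ?_
    · simpa [H, hua, hwa] using quarterArc_swap_zero (u x) (w x)
    · simpa [H, hua, hwa] using quarterArc_swap_one (u x) (w x)
  rw [Nat.sub_add_cancel hn] at hsphere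
  exact not_hasHemisphereTower_sphere (by rwa [Fintype.card_fin])

/-- The frame of the first `j` rows of an orthogonal matrix, the projection `O(n) → V_{n,j}`. -/
def rowFrame (hj : j ≤ n) (A : orthogonalGroup (Fin n) ℝ) : Stiefel n j :=
  ⟨fun i => WithLp.toLp 2 (A.1 (Fin.castLE hj i)), by
    refine orthonormal_iff_ite.2 fun i i' => ?_
    have hA := congrFun₂ ((mem_orthogonalGroup_iff _ _).1 A.2)
      (Fin.castLE hj i) (Fin.castLE hj i')
    rw [mul_apply, Matrix.one_apply] at hA
    simpa [PiLp.inner_apply, mul_comm] using hA⟩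

lemma continuous_rowFrame (hj : j ≤ n) : Continuous (rowFrame hj) :=
  Continuous.subtype_mk (continuous_pi fun i => (PiLp.continuous_toLp 2 _).comp
    (continuous_pi fun l => continuous_subtype_val.matrix_elem (Fin.castLE hj i) l)) _

lemma rowFrame_neg (hj : j ≤ n) (A : orthogonalGroup (Fin n) ℝ) :
    rowFrame hj (-A) = negFrame (rowFrame hj A) :=
  rfl

theorem no_antipodal_to_flip_map_from_SO_general {r : ℕ} (hr : 0 < r) (hn : n = 2 ^ r)
    (hj : j ≤ n) (hk : 0 < k) :
    ¬ ∃ f : Stiefel n j → Stiefel n (2 * k),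
        Continuous f ∧ ∀ v, f (negFrame v) = flipFrame (f v) := by
  rintro ⟨f, hf, hfneg⟩
  obtain ⟨r, rfl⟩ := Nat.exists_eq_add_one.2 hr
  subst hn
  refine not_exists_continuous_equivariant_flipFrame neg_involutive
    uniformContinuous_neg_orthogonalGroup.continuous
    (hasHemisphereTower_orthogonalGroup_two_pow r) (by positivity) hk
    ⟨f ∘ rowFrame hj, hf.comp (continuous_rowFrame hj), fun A => ?_⟩
  rw [Function.comp_apply, rowFrame_neg, hfneg, Function.comp_apply]

end Stiefel

/-- For `n = 2^r` (`r > 0`) and `1 < 2k ≤ n`, there is no continuous equivariant map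
`V_{n,n-1} → V_{n,2k}` (i.e. `SO(n) → V_{n,2k}`), where `C₂` acts antipodally on
`V_{n,n-1}` and by the flip action on `V_{n,2k}`. -/
theorem no_antipodal_to_flip_map_from_SO (r : ℕ) (hr : 0 < r) (n k : ℕ)
    (hn : n = 2 ^ r) (h1 : 1 < 2 * k) (h2 : 2 * k ≤ n) :
    ¬ ∃ f : Stiefel n (n - 1) → Stiefel n (2 * k),
        Continuous f ∧ ∀ v, f (negFrame v) = flipFrame (f v) :=
  no_antipodal_to_flip_map_from_SO_general hr hn (n.sub_le 1) (by lia)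
end
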